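/- arXiv:1907.04663 — 3 statements merged into one kernel-verified Lean document; each statement's English description precedes it below -/
import Mathlib

section
/- Assume dom f ≠ ∅ and P = ℝⁿ × ℝˢ, let p ∈ [1,∞), let (Ω,𝓕,ℙ) be atomless, let 𝓡 : L^p(Ω,𝓕,ℙ) → ℝ be law-invariant, convex and nondecreasing, let X ⊆ ℝⁿ be a nonempty polyhedron, and let 𝓜 ⊆ 𝓜^p_s be locally uniformly ‖·‖^p-integrating. Suppose μ₀ ∈ 𝓜 and V ⊊ ℝⁿ is an open bounded set such that Φ_V(μ₀) is a CLM set with respect to V. Then: (c) the localized optimal value function φ_V restricted to 𝓜 is continuous at μ₀ with respect to weak convergence; (d) Φ_V restricted to 𝓜 is upper semicontinuous at μ₀ in the sense of Berge, i.e. for every open set 𝓞 ⊆ ℝⁿ with Φ_V(μ₀) ⊆ 𝓞 there exists a weakly open neighborhood 𝓝 of μ₀ such that Φ_V(μ) ⊆ 𝓞 for all μ ∈ 𝓝 ∩ 𝓜; and (e) there exists a weakly open neighborhood 𝓤 of μ₀ such that Φ_V(μ) is a CLM set with respect to V for every μ ∈ 𝓤 ∩ 𝓜. -/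
open MeasureTheory Matrix Set Topology Filter
open scoped ENNReal NNReal

noncomputable section

/-- Feasible set of the lower level problem: `{ y | A y ≤ T x + z }`. -/
def LowerFeas {n m s : ℕ} (A : Matrix (Fin s) (Fin m) ℝ) (T : Matrix (Fin s) (Fin n) ℝ)
    (x : Fin n → ℝ) (z : Fin s → ℝ) : Set (Fin m → ℝ) :=
  {y | A.mulVec y ≤ T.mulVec x + z}

/-- Lower level optimal solution set `Ψ(x,z) = Argmin { dᵀy | A y ≤ T x + z }`. -/
def Psi {n m s : ℕ} (d : Fin m → ℝ) (A : Matrix (Fin s) (Fin m) ℝ)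
    (T : Matrix (Fin s) (Fin n) ℝ) (x : Fin n → ℝ) (z : Fin s → ℝ) : Set (Fin m → ℝ) :=
  {y | y ∈ LowerFeas A T x z ∧ ∀ y' ∈ LowerFeas A T x z, d ⬝ᵥ y ≤ d ⬝ᵥ y'}

/-- `f(x,z) = cᵀx + inf { qᵀ y | y ∈ Ψ(x,z) }` with values in `ℝ ∪ {±∞}`
(the infimum over the empty set being `+∞`). -/
def fE {n m s : ℕ} (c : Fin n → ℝ) (q d : Fin m → ℝ) (A : Matrix (Fin s) (Fin m) ℝ)
    (T : Matrix (Fin s) (Fin n) ℝ) (x : Fin n → ℝ) (z : Fin s → ℝ) : EReal :=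
  ((c ⬝ᵥ x : ℝ) : EReal) + sInf ((fun y => ((q ⬝ᵥ y : ℝ) : EReal)) '' Psi d A T x z)

/-- `P = { (x,z) | ∃ y, A y ≤ T x + z }`. -/
def Pfeas {n m s : ℕ} (A : Matrix (Fin s) (Fin m) ℝ) (T : Matrix (Fin s) (Fin n) ℝ) :
    Set ((Fin n → ℝ) × (Fin s → ℝ)) :=
  {p | (LowerFeas A T p.1 p.2).Nonempty}

/-- `dom f = { (x,z) | f(x,z) ∈ ℝ }`. -/
def domf {n m s : ℕ} (c : Fin n → ℝ) (q d : Fin m → ℝ) (A : Matrix (Fin s) (Fin m) ℝ)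
    (T : Matrix (Fin s) (Fin n) ℝ) : Set ((Fin n → ℝ) × (Fin s → ℝ)) :=
  {p | fE c q d A T p.1 p.2 ≠ ⊤ ∧ fE c q d A T p.1 p.2 ≠ ⊥}

/-- Topological support of a Borel measure. -/
def msupport {s : ℕ} (μ : Measure (Fin s → ℝ)) : Set (Fin s → ℝ) :=
  {z | ∀ U : Set (Fin s → ℝ), IsOpen U → z ∈ U → μ U ≠ 0}

/-- `P_Z = { x | (x,z) ∈ P for all z ∈ supp μ_Z }`. -/
def PZSet {n m s : ℕ} (A : Matrix (Fin s) (Fin m) ℝ) (T : Matrix (Fin s) (Fin n) ℝ)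
    (μZ : Measure (Fin s → ℝ)) : Set (Fin n → ℝ) :=
  {x | ∀ z ∈ msupport μZ, (x, z) ∈ Pfeas A T}


/-- A polyhedron: solution set of finitely many linear inequalities. -/
def IsPolyhedron {n : ℕ} (X : Set (Fin n → ℝ)) : Prop :=
  ∃ (k : ℕ) (B : Matrix (Fin k) (Fin n) ℝ) (b : Fin k → ℝ), X = {x | B.mulVec x ≤ b}

/-- An atomless probability space: every set of positive measure has a measurable
subset of strictly smaller positive measure. -/
def AtomlessSpace {Ω : Type*} [MeasurableSpace Ω] (μ : Measure Ω) : Prop :=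
  ∀ S : Set Ω, MeasurableSet S → 0 < μ S →
    ∃ B ⊆ S, MeasurableSet B ∧ 0 < μ B ∧ μ B < μ S

/-- A set of Borel probability measures is locally uniformly `‖·‖^p`-integrating if around
every member there is a weakly open neighbourhood on which the `p`-th moment tails vanish
uniformly (the limit as `a → ∞` of the antitone tail suprema being their infimum). -/
def LocUnifIntegrating {s : ℕ} (pr : ℝ) (M : Set (ProbabilityMeasure (Fin s → ℝ))) : Prop :=
  ∀ μ ∈ M, ∀ ε : ℝ, 0 < ε →
    ∃ N : Set (ProbabilityMeasure (Fin s → ℝ)), IsOpen N ∧ μ ∈ N ∧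
      ⨅ a : ℝ, ⨆ ν ∈ M ∩ N,
        ∫⁻ z in {z : Fin s → ℝ | a ≤ ‖z‖}, ENNReal.ofReal (‖z‖ ^ pr)
          ∂(ν : Measure (Fin s → ℝ)) ≤ ENNReal.ofReal ε

/-! ### Hoffman's Lipschitz bound for polyhedra, by Fourier-Motzkin elimination -/

lemma clamp_one {ι : Type} [Fintype ι] (b : ι → ℝ) :
    ∃ K : ℝ, 0 ≤ K ∧ ∀ (r : ι → ℝ) (v ε : ℝ), 0 ≤ ε → (∀ i, b i = 0 → 0 ≤ r i) →
      (∀ i j, 0 < b i → b j < 0 → 0 ≤ b i * r j - b j * r i) →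
      (∀ i, b i * v ≤ r i + ε) →
      ∃ v', (∀ i, b i * v' ≤ r i) ∧ |v - v'| ≤ K * ε := by
  classical
  refine ⟨∑ i, |b i|⁻¹, Finset.sum_nonneg (fun i _ => by positivity), ?_⟩
  intro r v ε hε h0 hpn hv
  have hK : ∀ i, |b i|⁻¹ ≤ ∑ i, |b i|⁻¹ := fun i =>
    Finset.single_le_sum (f := fun i => |b i|⁻¹) (fun i _ => by positivity) (Finset.mem_univ i)
  by_cases hall : ∀ i, b i * v ≤ r i
  · exact ⟨v, hall, by simpa using mul_nonneg (Finset.sum_nonneg (fun i _ => by positivity)) hε⟩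
  push Not at hall
  obtain ⟨i₀, hi₀⟩ := hall
  rcases lt_trichotomy (b i₀) 0 with hb | hb | hb
  · -- negative
    obtain ⟨i, hi, hmax⟩ := Finset.exists_max_image (Finset.univ.filter fun i => b i < 0)
      (fun i => r i / b i) ⟨i₀, by simpa using hb⟩
    simp only [Finset.mem_filter, Finset.mem_univ, true_and] at hi hmax
    have hvv : v < r i / b i := by
      refine lt_of_lt_of_le ?_ (hmax i₀ hb)
      rw [lt_div_iff_of_neg hb]; linarith
    refine ⟨r i / b i, ?_, ?_⟩
    · intro k
      rcases lt_trichotomy (b k) 0 with hk | hk | hk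
      · have := hmax k hk
        rw [div_le_iff_of_neg hk] at this
        linarith
      · rw [hk]; simpa using h0 k hk
      · have := hpn k i hk hi
        rw [mul_div_assoc', div_le_iff_of_neg hi]
        linarith
    · rw [abs_sub_comm, abs_of_pos (by linarith)]
      refine le_trans ?_ (mul_le_mul_of_nonneg_right (hK i) hε)
      rw [abs_of_neg hi]
      have := hv i
      have h2 : r i / b i * b i = r i := div_mul_cancel₀ _ hi.ne
      rw [inv_mul_eq_div, le_div_iff₀ (by linarith)]
      nlinarith
  · have := h0 i₀ hb
    rw [hb] at hi₀; linarith
  · obtain ⟨i, hi, hmin⟩ := Finset.exists_min_image (Finset.univ.filter fun i => 0 < b i)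
      (fun i => r i / b i) ⟨i₀, by simpa using hb⟩
    simp only [Finset.mem_filter, Finset.mem_univ, true_and] at hi hmin
    have hvv : r i / b i < v := by
      refine lt_of_le_of_lt (hmin i₀ hb) ?_
      rw [div_lt_iff₀ hb]; linarith
    refine ⟨r i / b i, ?_, ?_⟩
    · intro k
      rcases lt_trichotomy (b k) 0 with hk | hk | hk
      · have := hpn i k hi hk
        rw [mul_div_assoc', div_le_iff₀ hi]
        linarith
      · rw [hk]; simpa using h0 k hk
      · have := hmin k hk
        rw [le_div_iff₀ hk] at this
        linarith
    · rw [abs_of_pos (by linarith)]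
      refine le_trans ?_ (mul_le_mul_of_nonneg_right (hK i) hε)
      rw [abs_of_pos hi]
      have := hv i
      have h2 : r i / b i * b i = r i := div_mul_cancel₀ _ hi.ne'
      rw [inv_mul_eq_div, le_div_iff₀ (by linarith)]
      nlinarith

lemma hoffman_aux (m : ℕ) : ∀ {ι : Type} [Fintype ι] (A : ι → Fin m → ℝ),
    ∃ L : ℝ, 0 ≤ L ∧ ∀ (h h' : ι → ℝ) (δ : ℝ), 0 ≤ δ → (∀ i, |h i - h' i| ≤ δ) →
      (∃ y : Fin m → ℝ, ∀ i, ∑ j, A i j * y j ≤ h' i) →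
      ∀ y : Fin m → ℝ, (∀ i, ∑ j, A i j * y j ≤ h i) →
        ∃ y' : Fin m → ℝ, (∀ i, ∑ j, A i j * y' j ≤ h' i) ∧ ∀ j, |y j - y' j| ≤ L * δ := by
  classical
  induction m with
  | zero =>
    intro ι _ A
    refine ⟨0, le_rfl, ?_⟩
    rintro h h' δ - - ⟨y', hy'⟩ y -
    exact ⟨y', hy', fun j => j.elim0⟩
  | succ m ih =>
    intro ι _ A
    set b : ι → ℝ := fun i => A i 0 with hb
    set a : ι → Fin m → ℝ := fun i j => A i j.succ with ha
    set α : ι × ι → ℝ := fun p =>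
      if b p.1 = 0 then 1 else if 0 < b p.1 ∧ b p.2 < 0 then - b p.2 else 0 with hα
    set β : ι × ι → ℝ := fun p =>
      if b p.1 = 0 then 0 else if 0 < b p.1 ∧ b p.2 < 0 then b p.1 else 0 with hβ
    have hα0 : ∀ p, 0 ≤ α p := by
      intro p; simp only [hα]; split_ifs with h1 h2
      · norm_num
      · linarith [h2.2]
      · norm_num
    have hβ0 : ∀ p, 0 ≤ β p := by
      intro p; simp only [hβ]; split_ifs with h1 h2
      · norm_num
      · linarith [h2.1]
      · norm_num
    have hαβ : ∀ p, α p * b p.1 + β p * b p.2 = 0 := by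
      intro p; simp only [hα, hβ]; split_ifs with h1 h2
      · simp [h1]
      · ring
      · ring
    obtain ⟨L, hL0, hL⟩ := ih (fun p : ι × ι => fun j => α p * a p.1 j + β p * a p.2 j)
    obtain ⟨K, hK0, hK⟩ := clamp_one b
    set C : ℝ := ∑ p, (α p + β p) with hC
    have hC0 : 0 ≤ C := Finset.sum_nonneg fun p _ => add_nonneg (hα0 p) (hβ0 p)
    have hCp : ∀ p, α p + β p ≤ C := fun p =>
      Finset.single_le_sum (f := fun p => α p + β p)
        (fun p _ => add_nonneg (hα0 p) (hβ0 p)) (Finset.mem_univ p)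
    set E : ℝ := ∑ i, ∑ j, |a i j| with hE
    have hE0 : 0 ≤ E := Finset.sum_nonneg fun i _ => Finset.sum_nonneg fun j _ => abs_nonneg _
    have hEi : ∀ i, ∑ j, |a i j| ≤ E := fun i =>
      Finset.single_le_sum (f := fun i => ∑ j, |a i j|)
        (fun i _ => Finset.sum_nonneg fun j _ => abs_nonneg _) (Finset.mem_univ i)
    refine ⟨L * C + K * (1 + E * (L * C)), by positivity, ?_⟩
    intro h h' δ hδ hhh hne y hy
    have hred : ∀ (g : ι → ℝ) (w : Fin (m+1) → ℝ), (∀ i, ∑ j, A i j * w j ≤ g i) →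
        ∀ p : ι × ι, ∑ j, (α p * a p.1 j + β p * a p.2 j) * w j.succ
          ≤ α p * g p.1 + β p * g p.2 := by
      intro g w hw p
      have h1 := mul_le_mul_of_nonneg_left (hw p.1) (hα0 p)
      have h2 := mul_le_mul_of_nonneg_left (hw p.2) (hβ0 p)
      rw [Fin.sum_univ_succ] at h1 h2
      have h3 := hαβ p
      have h4 : ∑ j, (α p * a p.1 j + β p * a p.2 j) * w j.succ
          = α p * ∑ j : Fin m, A p.1 j.succ * w j.succ
            + β p * ∑ j : Fin m, A p.2 j.succ * w j.succ := by
        rw [Finset.mul_sum, Finset.mul_sum, ← Finset.sum_add_distrib]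
        refine Finset.sum_congr rfl fun j _ => ?_
        simp only [ha]; ring
      rw [h4]
      have h5 : α p * (A p.1 0 * w 0) + β p * (A p.2 0 * w 0) = 0 := by
        have : α p * A p.1 0 + β p * A p.2 0 = 0 := h3
        linear_combination w 0 * this
      linarith
    obtain ⟨w, hw⟩ := hne
    obtain ⟨u', hu', hu'd⟩ := hL (fun p => α p * h p.1 + β p * h p.2)
      (fun p => α p * h' p.1 + β p * h' p.2) (C * δ) (by positivity)
      (by
        intro p
        have : α p * h p.1 + β p * h p.2 - (α p * h' p.1 + β p * h' p.2)
          = α p * (h p.1 - h' p.1) + β p * (h p.2 - h' p.2) := by ring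
        rw [this]
        calc _ ≤ |α p * (h p.1 - h' p.1)| + |β p * (h p.2 - h' p.2)| := abs_add_le _ _
          _ = α p * |h p.1 - h' p.1| + β p * |h p.2 - h' p.2| := by
              rw [abs_mul, abs_mul, abs_of_nonneg (hα0 p), abs_of_nonneg (hβ0 p)]
          _ ≤ α p * δ + β p * δ := add_le_add
              (mul_le_mul_of_nonneg_left (hhh _) (hα0 p)) (mul_le_mul_of_nonneg_left (hhh _) (hβ0 p))
          _ = (α p + β p) * δ := by ring
          _ ≤ C * δ := mul_le_mul_of_nonneg_right (hCp p) hδ)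
      ⟨fun j => w j.succ, hred h' w hw⟩ (fun j => y j.succ) (hred h y hy)
    set r : ι → ℝ := fun i => h' i - ∑ j, a i j * u' j with hr
    have hcomb : ∀ p : ι × ι, 0 ≤ α p * r p.1 + β p * r p.2 := by
      intro p
      have h1 := hu' p
      have h4 : ∑ j, (α p * a p.1 j + β p * a p.2 j) * u' j
          = α p * ∑ j : Fin m, a p.1 j * u' j
            + β p * ∑ j : Fin m, a p.2 j * u' j := by
        rw [Finset.mul_sum, Finset.mul_sum, ← Finset.sum_add_distrib]
        refine Finset.sum_congr rfl fun j _ => ?_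
        ring
      rw [h4] at h1
      simp only [hr]
      linarith
    obtain ⟨v', hv', hv'd⟩ := hK r (y 0) ((1 + E * (L * C)) * δ) (by positivity)
      (by
        intro i hi
        have := hcomb (i, i)
        simpa [hα, hβ, hi] using this)
      (by
        intro i j hi hj
        have := hcomb (i, j)
        simp only [hα, hβ, hi.ne', hi, hj, if_true, if_false, and_self] at this
        linarith)
      (by
        intro i
        have h1 := hy i
        rw [Fin.sum_univ_succ] at h1
        have h2 := (abs_le.1 (hhh i)).2
        have h3 : ∑ j, a i j * u' j - ∑ j : Fin m, A i j.succ * y j.succ ≤ E * (L * C) * δ := by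
          rw [← Finset.sum_sub_distrib]
          calc _ ≤ ∑ j, |a i j| * (L * (C * δ)) := by
                refine Finset.sum_le_sum fun j _ => ?_
                have : a i j * u' j - A i j.succ * y j.succ = - (a i j * (y j.succ - u' j)) := by
                  simp only [ha]; ring
                rw [this]
                refine (neg_le_abs _).trans ?_
                rw [abs_mul]
                exact mul_le_mul_of_nonneg_left (hu'd j) (abs_nonneg _)
            _ = (∑ j, |a i j|) * (L * (C * δ)) := by rw [← Finset.sum_mul]
            _ ≤ E * (L * (C * δ)) := mul_le_mul_of_nonneg_right (hEi i) (by positivity)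
            _ = _ := by ring
        simp only [hb, hr]
        linarith)
    refine ⟨Fin.cons v' u', ?_, ?_⟩
    · intro i
      rw [Fin.sum_univ_succ]
      have := hv' i
      simp only [hr] at this
      simp only [Fin.cons_zero, Fin.cons_succ]
      simp only [hb, ha] at this
      linarith
    · intro j
      refine Fin.cases ?_ (fun j => ?_) j
      · simp only [Fin.cons_zero]
        refine hv'd.trans ?_
        have : 0 ≤ L * C * δ := by positivity
        nlinarith
      · simp only [Fin.cons_succ]
        refine (hu'd j).trans ?_
        have : 0 ≤ K * (1 + E * (L * C)) * δ := by positivity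
        nlinarith

lemma hoffman {ι : Type} [Fintype ι] {m : ℕ} (A : ι → Fin m → ℝ) :
    ∃ L : ℝ, 0 ≤ L ∧ ∀ (h h' : ι → ℝ),
      (∃ y : Fin m → ℝ, ∀ i, A i ⬝ᵥ y ≤ h' i) →
      ∀ y : Fin m → ℝ, (∀ i, A i ⬝ᵥ y ≤ h i) →
        ∃ y' : Fin m → ℝ, (∀ i, A i ⬝ᵥ y' ≤ h' i) ∧ ‖y - y'‖ ≤ L * ‖h - h'‖ := by
  obtain ⟨L, hL0, hL⟩ := hoffman_aux m A
  refine ⟨L, hL0, fun h h' hne y hy => ?_⟩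
  obtain ⟨y', hy', hd⟩ := hL h h' ‖h - h'‖ (norm_nonneg _)
    (fun i => by simpa using norm_le_pi_norm (h - h') i) hne y hy
  refine ⟨y', hy', ?_⟩
  rw [pi_norm_le_iff_of_nonneg (by positivity)]
  intro j
  simpa using hd j

lemma dot_lip {m : ℕ} (q : Fin m → ℝ) (y y' : Fin m → ℝ) :
    q ⬝ᵥ y ≤ q ⬝ᵥ y' + (∑ j, |q j|) * ‖y - y'‖ := by
  have : q ⬝ᵥ y - q ⬝ᵥ y' ≤ (∑ j, |q j|) * ‖y - y'‖ := by
    rw [← dotProduct_sub, dotProduct, Finset.sum_mul]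
    refine Finset.sum_le_sum fun j _ => ?_
    refine (le_abs_self _).trans ?_
    rw [abs_mul]
    exact mul_le_mul_of_nonneg_left (norm_le_pi_norm (y - y') j) (abs_nonneg _)
  linarith

lemma inf_lip {s m : ℕ} (S : (Fin s → ℝ) → Set (Fin m → ℝ)) (L : ℝ) (hL0 : 0 ≤ L)
    (hne : ∀ h, (S h).Nonempty)
    (hL : ∀ h h', ∀ y ∈ S h, ∃ y' ∈ S h', ‖y - y'‖ ≤ L * ‖h - h'‖)
    (q : Fin m → ℝ) (h₀ : Fin s → ℝ) (B : ℝ) (hB : ∀ y ∈ S h₀, B ≤ q ⬝ᵥ y) :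
    ∃ K : ℝ, 0 ≤ K ∧ (∀ h, BddBelow ((fun y => q ⬝ᵥ y) '' S h)) ∧
      ∀ h h', |sInf ((fun y => q ⬝ᵥ y) '' S h) - sInf ((fun y => q ⬝ᵥ y) '' S h')|
        ≤ K * ‖h - h'‖ := by
  set D : ℝ := ∑ j, |q j| with hD
  have hD0 : 0 ≤ D := Finset.sum_nonneg fun _ _ => abs_nonneg _
  have key : ∀ h h', ∀ y ∈ S h, ∃ y' ∈ S h', q ⬝ᵥ y' ≤ q ⬝ᵥ y + D * L * ‖h - h'‖ := by
    intro h h' y hy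
    obtain ⟨y', hy', hd⟩ := hL h h' y hy
    refine ⟨y', hy', (dot_lip q y' y).trans ?_⟩
    rw [norm_sub_rev y' y]
    have := mul_le_mul_of_nonneg_left hd hD0
    linarith
  have hbdd : ∀ h, BddBelow ((fun y => q ⬝ᵥ y) '' S h) := by
    intro h
    refine ⟨B - D * L * ‖h - h₀‖, ?_⟩
    rintro _ ⟨y, hy, rfl⟩
    obtain ⟨y', hy', hd⟩ := key h h₀ y hy
    have := hB y' hy'
    simp only
    linarith
  have one : ∀ h h', sInf ((fun y => q ⬝ᵥ y) '' S h')
      ≤ sInf ((fun y => q ⬝ᵥ y) '' S h) + D * L * ‖h - h'‖ := by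
    intro h h'
    rw [← sub_le_iff_le_add]
    refine le_csInf ((hne h).image _) ?_
    rintro _ ⟨y, hy, rfl⟩
    obtain ⟨y', hy', hd⟩ := key h h' y hy
    have := csInf_le (hbdd h') (mem_image_of_mem _ hy')
    simp only at this ⊢
    linarith
  refine ⟨D * L, by positivity, hbdd, fun h h' => ?_⟩
  rw [abs_le]
  have h1 := one h h'
  have h2 := one h' h
  rw [norm_sub_rev] at h2
  constructor <;> linarith

/-- The optimal value of the bilevel problem is everywhere finite and Lipschitz. -/
lemma fE_structure {n m s : ℕ}
    (c : Fin n → ℝ) (q d : Fin m → ℝ)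
    (A : Matrix (Fin s) (Fin m) ℝ) (T : Matrix (Fin s) (Fin n) ℝ)
    (hdom : (domf c q d A T).Nonempty) (hP : Pfeas A T = Set.univ) :
    ∃ (g : (Fin s → ℝ) → ℝ) (K : ℝ), 0 ≤ K ∧ (∀ h h', |g h - g h'| ≤ K * ‖h - h'‖) ∧
      ∀ x z, fE c q d A T x z = ((c ⬝ᵥ x + g (T.mulVec x + z) : ℝ) : EReal) := by
  set S : (Fin s → ℝ) → Set (Fin m → ℝ) := fun h => {y | ∀ i, A i ⬝ᵥ y ≤ h i} with hS
  have hSne : ∀ h, (S h).Nonempty := by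
    intro h
    have : ((0 : Fin n → ℝ), h) ∈ Pfeas A T := by rw [hP]; trivial
    obtain ⟨y, hy⟩ := this
    refine ⟨y, fun i => ?_⟩
    have := hy i
    simpa [Matrix.mulVec] using this
  obtain ⟨L, hL0, hL⟩ := hoffman (A : Fin s → Fin m → ℝ)
  set Pp : (Fin s → ℝ) → Set (Fin m → ℝ) :=
    fun h => {y | y ∈ S h ∧ ∀ y' ∈ S h, d ⬝ᵥ y ≤ d ⬝ᵥ y'} with hPp
  have hPsi : ∀ x z, Psi d A T x z = Pp (T.mulVec x + z) := fun x z => rfl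
  obtain ⟨⟨x₀, z₀⟩, hft, hfb⟩ := hdom
  set h₀ := T.mulVec x₀ + z₀ with hh₀
  simp only [fE, hPsi] at hft hfb
  have hPne : (Pp h₀).Nonempty := by
    by_contra hcon
    rw [Set.not_nonempty_iff_eq_empty] at hcon
    rw [← hh₀, hcon] at hft
    simp at hft
  obtain ⟨B, hB⟩ : ∃ B : ℝ, ∀ y ∈ Pp h₀, B ≤ q ⬝ᵥ y := by
    have hne : sInf ((fun y => ((q ⬝ᵥ y : ℝ) : EReal)) '' Pp h₀) ≠ ⊥ := by
      intro hcon
      rw [← hh₀, hcon] at hfb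
      simp at hfb
    obtain ⟨r, -, hr⟩ := EReal.lt_iff_exists_real_btwn.1 (bot_lt_iff_ne_bot.2 hne)
    refine ⟨r, fun y hy => ?_⟩
    exact EReal.coe_le_coe_iff.1 (hr.le.trans (sInf_le (mem_image_of_mem _ hy)))
  obtain ⟨ys, hys⟩ := hPne
  -- lower level value
  obtain ⟨K₁, hK₁0, hbdd₁, hlip₁⟩ := inf_lip S L hL0 hSne
    (fun h h' y hy => hL h h' (hSne h') y hy) d h₀ (d ⬝ᵥ ys) (fun y hy => hys.2 y hy)
  set φ : (Fin s → ℝ) → ℝ := fun h => sInf ((fun y => d ⬝ᵥ y) '' S h) with hφ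
  -- extended system
  set A' : Option (Fin s) → Fin m → ℝ := fun o => o.elim d A with hA'
  obtain ⟨L', hL'0, hL'⟩ := hoffman A'
  set S' : (Fin s → ℝ) → ℝ → Set (Fin m → ℝ) := fun h t => {y | y ∈ S h ∧ d ⬝ᵥ y ≤ t} with hS'
  have hnormle : ∀ (h h' : Fin s → ℝ) (t t' : ℝ),
      ‖(fun o : Option (Fin s) => o.elim t h) - (fun o => o.elim t' h')‖ ≤ ‖h - h'‖ + |t - t'| := by
    intro h h' t t'
    rw [pi_norm_le_iff_of_nonneg (by positivity)]
    rintro (_ | i)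
    · simp
    · have := norm_le_pi_norm (h - h') i
      simp only [Pi.sub_apply] at this ⊢
      have h2 := abs_nonneg (t - t')
      simpa using this.trans (le_add_of_nonneg_right h2)
  have hL'' : ∀ h h' t t', (S' h' t').Nonempty → ∀ y ∈ S' h t, ∃ y' ∈ S' h' t',
      ‖y - y'‖ ≤ L' * (‖h - h'‖ + |t - t'|) := by
    intro h h' t t' hne y hy
    obtain ⟨w, hw⟩ := hne
    obtain ⟨y', hy', hd⟩ := hL' (fun o => o.elim t h) (fun o => o.elim t' h')
      ⟨w, by rintro (_ | i); exacts [hw.2, hw.1 i]⟩ y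
      (by rintro (_ | i); exacts [hy.2, hy.1 i])
    exact ⟨y', ⟨fun i => hy' (some i), hy' none⟩,
      hd.trans (mul_le_mul_of_nonneg_left (hnormle _ _ _ _) hL'0)⟩
  have hatt : ∀ h, (S' h (φ h)).Nonempty := by
    intro h
    have hne : ∀ t, φ h < t → (S' h t).Nonempty := by
      intro t ht
      obtain ⟨_, ⟨y, hy, rfl⟩, hyt⟩ := exists_lt_of_csInf_lt ((hSne h).image _) ht
      exact ⟨y, hy, hyt.le⟩
    obtain ⟨y₁, hy₁⟩ := hne (φ h + 1) (by linarith)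
    have hseq : ∀ k : ℕ, ∃ y ∈ S' h (φ h + 1 / ((k : ℝ) + 1)), ‖y₁ - y‖ ≤ L' := by
      intro k
      have hpos : 0 < 1 / ((k : ℝ) + 1) := by positivity
      have hle : 1 / ((k : ℝ) + 1) ≤ 1 := by
        rw [div_le_one (by positivity)]
        have : (0 : ℝ) ≤ k := Nat.cast_nonneg k
        linarith
      obtain ⟨y, hy, hd⟩ := hL'' h h (φ h + 1) (φ h + 1 / ((k : ℝ) + 1))
        (hne _ (by linarith)) y₁ hy₁
      refine ⟨y, hy, hd.trans ?_⟩
      rw [sub_self, norm_zero, zero_add, add_sub_add_left_eq_sub, abs_of_nonneg (by linarith)]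
      nlinarith
    choose y hy hd using hseq
    have hmem : ∀ k, y k ∈ Metric.closedBall y₁ L' := fun k => by
      rw [Metric.mem_closedBall, dist_comm, dist_eq_norm]; exact hd k
    obtain ⟨a, -, θ, hθ, hlim⟩ := (isCompact_closedBall y₁ L').tendsto_subseq hmem
    refine ⟨a, fun i => ?_, ?_⟩
    · have hc : Tendsto (fun k => A i ⬝ᵥ y (θ k)) atTop (𝓝 (A i ⬝ᵥ a)) :=
        ((continuous_const.dotProduct continuous_id).tendsto a).comp hlim
      exact le_of_tendsto' hc fun k => (hy (θ k)).1 i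
    · have hc : Tendsto (fun k => d ⬝ᵥ y (θ k)) atTop (𝓝 (d ⬝ᵥ a)) :=
        ((continuous_const.dotProduct continuous_id).tendsto a).comp hlim
      have h2 : Tendsto (fun k : ℕ => φ h + 1 / (((θ k : ℕ) : ℝ) + 1)) atTop (𝓝 (φ h + 0)) :=
        tendsto_const_nhds.add (tendsto_one_div_add_atTop_nhds_zero_nat.comp hθ.tendsto_atTop)
      rw [add_zero] at h2
      exact le_of_tendsto_of_tendsto' hc h2 fun k => (hy (θ k)).2
  have hPS : ∀ h, Pp h = S' h (φ h) := by
    intro h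
    ext y
    constructor
    · rintro ⟨hy, hmin⟩
      refine ⟨hy, le_csInf ((hSne h).image _) ?_⟩
      rintro _ ⟨y', hy', rfl⟩
      exact hmin y' hy'
    · rintro ⟨hy, hle⟩
      exact ⟨hy, fun y' hy' => hle.trans (csInf_le (hbdd₁ h) (mem_image_of_mem _ hy'))⟩
  obtain ⟨K₂, hK₂0, hbdd₂, hlip₂⟩ := inf_lip Pp (L' * (1 + K₁)) (by positivity)
    (fun h => by rw [hPS]; exact hatt h)
    (fun h h' y hy => by
      rw [hPS] at hy ⊢
      obtain ⟨y', hy', hd⟩ := hL'' h h' (φ h) (φ h') (hatt h') y hy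
      refine ⟨y', hy', hd.trans ?_⟩
      rw [mul_assoc]
      refine mul_le_mul_of_nonneg_left ?_ hL'0
      have := hlip₁ h h'
      simp only [hφ]
      linarith) q h₀ B hB
  refine ⟨fun h => sInf ((fun y => q ⬝ᵥ y) '' Pp h), K₂, hK₂0, hlip₂, fun x z => ?_⟩
  rw [fE, hPsi, EReal.coe_add]
  congr 1
  have hne : (Pp (T.mulVec x + z)).Nonempty := by rw [hPS]; exact hatt _
  refine le_antisymm ?_ ?_
  · by_contra hcon
    rw [not_le] at hcon
    obtain ⟨r, hr1, hr2⟩ := EReal.lt_iff_exists_real_btwn.1 hcon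
    obtain ⟨_, ⟨y, hy, rfl⟩, hyt⟩ :=
      exists_lt_of_csInf_lt (hne.image _) (EReal.coe_lt_coe_iff.1 hr1)
    have h3 : sInf ((fun y => ((q ⬝ᵥ y : ℝ) : EReal)) '' Pp (T.mulVec x + z))
        ≤ ((q ⬝ᵥ y : ℝ) : EReal) := sInf_le (mem_image_of_mem _ hy)
    exact absurd (hr2.trans_le h3) (not_lt.2 (EReal.coe_le_coe_iff.2 hyt.le))
  · refine le_sInf ?_
    rintro _ ⟨y, hy, rfl⟩
    exact EReal.coe_le_coe_iff.2 (csInf_le (hbdd₂ _) (mem_image_of_mem _ hy))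

/-! ### A uniform random variable on an atomless space -/

section Atomless

variable {Ω : Type*} [MeasurableSpace Ω] {μ : Measure Ω}

lemma atomless_small [IsFiniteMeasure μ] (hat : AtomlessSpace μ) {S : Set Ω}
    (hS : MeasurableSet S) (hpos : 0 < μ.real S) {ε : ℝ} (hε : 0 < ε) :
    ∃ B ⊆ S, MeasurableSet B ∧ 0 < μ.real B ∧ μ.real B ≤ ε := by
  have key : ∀ k : ℕ, ∃ B ⊆ S, MeasurableSet B ∧ 0 < μ.real B ∧ μ.real B ≤ μ.real S / 2 ^ k := by
    intro k
    induction k with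
    | zero => exact ⟨S, subset_rfl, hS, hpos, by simp⟩
    | succ k ih =>
      obtain ⟨B, hBS, hB, hB0, hBk⟩ := ih
      obtain ⟨C, hCB, hC, hC0, hClt⟩ := hat B hB (by
        rw [Measure.real, ENNReal.toReal_pos_iff] at hB0; exact hB0.1)
      have hC0' : 0 < μ.real C := ENNReal.toReal_pos hC0.ne' (measure_ne_top _ _)
      have hClt' : μ.real C < μ.real B :=
        (ENNReal.toReal_lt_toReal (measure_ne_top _ _) (measure_ne_top _ _)).2 hClt
      have hd : μ.real (B \ C) = μ.real B - μ.real C := measureReal_sdiff hCB hC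
      have h2 : μ.real S / 2 ^ (k + 1) = μ.real S / 2 ^ k / 2 := by
        rw [pow_succ, div_div]
      rw [h2]
      by_cases hh : μ.real C ≤ μ.real B / 2
      · exact ⟨C, hCB.trans hBS, hC, hC0', by linarith⟩
      · push Not at hh
        exact ⟨B \ C, sdiff_subset.trans hBS, hB.diff hC, by rw [hd]; linarith,
          by rw [hd]; linarith⟩
  obtain ⟨k, hk⟩ := exists_pow_lt_of_lt_one (div_pos hε hpos) (by norm_num : (1/2 : ℝ) < 1)
  obtain ⟨B, h1, h2, h3, h4⟩ := key k
  refine ⟨B, h1, h2, h3, h4.trans ?_⟩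
  rw [lt_div_iff₀ hpos] at hk
  rw [div_eq_inv_mul, ← inv_pow]
  norm_num at hk ⊢
  exact hk.le

lemma sierpinski [IsFiniteMeasure μ] (hat : AtomlessSpace μ) {S : Set Ω}
    (hS : MeasurableSet S) {t : ℝ} (ht0 : 0 ≤ t) (htS : t ≤ μ.real S) :
    ∃ D ⊆ S, MeasurableSet D ∧ μ.real D = t := by
  let P : Set Ω → Prop := fun A => MeasurableSet A ∧ A ⊆ S ∧ μ.real A ≤ t
  have step : ∀ A : {A // P A}, ∃ A' : {A // P A}, A.1 ⊆ A'.1 ∧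
      ∀ E ⊆ S \ A.1, MeasurableSet E → μ.real E ≤ t - μ.real A.1 →
        μ.real E ≤ 2 * (μ.real A'.1 - μ.real A.1) := by
    rintro ⟨A, hA, hAS, hAt⟩
    let W : Set ℝ := {w | ∃ E ⊆ S \ A, MeasurableSet E ∧ μ.real E ≤ t - μ.real A ∧ μ.real E = w}
    have hWb : BddAbove W := ⟨t - μ.real A, by rintro _ ⟨E, -, -, h, rfl⟩; exact h⟩
    have hWne : W.Nonempty := ⟨0, ∅, empty_subset _, MeasurableSet.empty, by simpa using hAt, by simp⟩
    by_cases hσ : sSup W ≤ 0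
    · refine ⟨⟨A, hA, hAS, hAt⟩, subset_rfl, fun E h1 h2 h3 => ?_⟩
      have : μ.real E ≤ sSup W := le_csSup hWb ⟨E, h1, h2, h3, rfl⟩
      simp only [sub_self, mul_zero]
      linarith
    · push Not at hσ
      obtain ⟨_, ⟨E, hE1, hE2, hE3, rfl⟩, hE4⟩ := exists_lt_of_lt_csSup hWne (half_lt_self hσ)
      have hdisj : Disjoint A E := by
        rw [Set.disjoint_left]; exact fun x hx hxE => (hE1 hxE).2 hx
      have hU : μ.real (A ∪ E) = μ.real A + μ.real E := measureReal_union hdisj hE2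
      refine ⟨⟨A ∪ E, hA.union hE2, union_subset hAS (hE1.trans sdiff_subset), by linarith⟩,
        subset_union_left, fun E' h1 h2 h3 => ?_⟩
      have : μ.real E' ≤ sSup W := le_csSup hWb ⟨E', h1, h2, h3, rfl⟩
      simp only [hU]
      linarith
  choose nxt hn1 hn2 using step
  let seq : ℕ → {A // P A} := fun n =>
    Nat.rec ⟨∅, MeasurableSet.empty, empty_subset _, by simpa using ht0⟩ (fun _ A => nxt A) n
  have hseq : ∀ n, seq (n+1) = nxt (seq n) := fun n => rfl
  have hmono : Monotone fun n => (seq n).1 := monotone_nat_of_le_succ fun n => by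
    rw [hseq]; exact hn1 _
  set D := ⋃ n, (seq n).1 with hD
  have hDm : MeasurableSet D := MeasurableSet.iUnion fun n => (seq n).2.1
  have hDS : D ⊆ S := iUnion_subset fun n => (seq n).2.2.1
  have hlim : Tendsto (fun n => μ.real (seq n).1) atTop (𝓝 (μ.real D)) := by
    have := tendsto_measure_iUnion_atTop (μ := μ) hmono
    exact (ENNReal.tendsto_toReal (measure_ne_top _ _)).comp this
  have hDt : μ.real D ≤ t := le_of_tendsto' hlim fun n => (seq n).2.2.2
  refine ⟨D, hDS, hDm, le_antisymm hDt ?_⟩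
  by_contra hlt
  push Not at hlt
  have hdiff : 0 < μ.real (S \ D) := by
    rw [measureReal_sdiff hDS hDm]; linarith
  obtain ⟨E, hE1, hE2, hE3, hE4⟩ := atomless_small hat (hS.diff hDm) hdiff (sub_pos.2 hlt)
  have hlim0 : Tendsto (fun n => 2 * (μ.real (seq (n+1)).1 - μ.real (seq n).1)) atTop
      (𝓝 (2 * (μ.real D - μ.real D))) :=
    ((hlim.comp (tendsto_add_atTop_nat 1)).sub hlim).const_mul 2
  have : μ.real E ≤ 2 * (μ.real D - μ.real D) := ge_of_tendsto' hlim0 fun n => by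
    rw [hseq]
    refine hn2 _ E (hE1.trans (sdiff_subset_sdiff_right (subset_iUnion (fun n => (seq n).1) n))) hE2 ?_
    have : μ.real (seq n).1 ≤ μ.real D := measureReal_mono (subset_iUnion (fun n => (seq n).1) n)
    linarith
  linarith

lemma between [IsFiniteMeasure μ] (hat : AtomlessSpace μ) {A B : Set Ω}
    (hA : MeasurableSet A) (hB : MeasurableSet B) (hAB : A ⊆ B) :
    ∃ C, MeasurableSet C ∧ A ⊆ C ∧ C ⊆ B ∧ μ.real C = (μ.real A + μ.real B) / 2 := by
  have hd := measureReal_sdiff (μ := μ) hAB hA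
  have hm : μ.real A ≤ μ.real B := measureReal_mono hAB
  obtain ⟨D, hD1, hD2, hD3⟩ := sierpinski (μ := μ) hat (hB.diff hA) (t := (μ.real B - μ.real A) / 2)
    (by linarith) (by linarith)
  have hdisj : Disjoint A D := by
    rw [Set.disjoint_left]; exact fun x hx hxE => (hD1 hxE).2 hx
  refine ⟨A ∪ D, hA.union hD2, subset_union_left, union_subset hAB (hD1.trans sdiff_subset), ?_⟩
  rw [measureReal_union hdisj hD2, hD3]
  ring

/-- On an atomless probability space there is a uniformly distributed random variable. -/
lemma exists_uniform [IsProbabilityMeasure μ] (hat : AtomlessSpace μ) :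
    ∃ U : Ω → ℝ, Measurable U ∧ ∀ t, 0 ≤ t → t ≤ 1 → μ.real {ω | U ω < t} = t := by
  classical
  let Pr : ℕ → (ℕ → Set Ω) → Prop := fun n C => (∀ k, MeasurableSet (C k)) ∧ Monotone C ∧
    ∀ k, μ.real (C k) = min ((k : ℝ) / 2 ^ n) 1
  have step : ∀ n, ∀ C : {C // Pr n C}, ∃ C' : {C // Pr (n+1) C}, ∀ k, C'.1 (2 * k) = C.1 k := by
    rintro n ⟨C, hCm, hCmono, hCμ⟩
    have hb := fun k => between (μ := μ) hat (hCm k) (hCm (k+1)) (hCmono (Nat.le_succ k))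
    choose H h1 h2 h3 h4 using hb
    have h20 : ∀ k, (2 * k) / 2 = k := fun k => by omega
    have h21 : ∀ k, (2 * k + 1) / 2 = k := fun k => by omega
    let C' : ℕ → Set Ω := fun k => if k % 2 = 0 then C (k / 2) else H (k / 2)
    have he : ∀ k, C' (2 * k) = C k := fun k => by simp [C', h20]
    have ho : ∀ k, C' (2 * k + 1) = H k := fun k => by simp [C', h21]
    have hcase : ∀ (p : ℕ → Prop), (∀ k, p (2 * k)) → (∀ k, p (2 * k + 1)) → ∀ k, p k := by
      intro p h1 h2 k
      rcases Nat.even_or_odd' k with ⟨j, rfl | rfl⟩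
      · exact h1 j
      · exact h2 j
    refine ⟨⟨C', ?_, ?_, ?_⟩, he⟩
    · refine hcase _ (fun k => ?_) (fun k => ?_)
      · rw [he]; exact hCm k
      · rw [ho]; exact h1 k
    · refine monotone_nat_of_le_succ (hcase _ (fun k => ?_) (fun k => ?_))
      · rw [he, ho]; exact h2 k
      · rw [ho, show 2 * k + 1 + 1 = 2 * (k + 1) by ring, he]; exact h3 k
    · refine hcase _ (fun k => ?_) (fun k => ?_)
      · rw [he, hCμ]; congr 1; push_cast; rw [pow_succ]; field_simp
      · rw [ho, h4, hCμ, hCμ]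
        have hp : (0 : ℝ) < 2 ^ n := by positivity
        rcases Nat.lt_or_ge k (2 ^ n) with hk | hk
        · have hk' : ((k : ℝ) + 1) ≤ 2 ^ n := by exact_mod_cast hk
          rw [min_eq_left, min_eq_left, min_eq_left]
          · push_cast; rw [pow_succ]; field_simp; ring
          · push_cast; rw [div_le_one (by positivity), pow_succ]; linarith
          · push_cast; rw [div_le_one hp]; linarith
          · rw [div_le_one hp]; linarith
        · have hk' : (2 : ℝ) ^ n ≤ k := by exact_mod_cast hk
          rw [min_eq_right, min_eq_right, min_eq_right]
          · norm_num
          · push_cast; rw [one_le_div (by positivity), pow_succ]; linarith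
          · push_cast; rw [one_le_div hp]; linarith
          · rw [one_le_div hp]; linarith
  choose nxt hnxt using step
  have hinit : Pr 0 (fun k => if k = 0 then ∅ else univ) := by
    refine ⟨fun k => ?_, ?_, fun k => ?_⟩
    · beta_reduce; split_ifs <;> measurability
    · refine monotone_nat_of_le_succ fun k => ?_
      simp
    · rcases k with _ | k
      · simp
      · simp only [Nat.add_eq_zero_iff, one_ne_zero, and_false, if_false]
        rw [min_eq_right]
        · simp
        · push_cast; simp
  let C : (n : ℕ) → {C // Pr n C} := fun n => Nat.rec ⟨_, hinit⟩ (fun n A => nxt n A) n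
  have hCs : ∀ n k, (C (n+1)).1 (2 * k) = (C n).1 k := fun n k => hnxt n (C n) k
  -- consistency across levels
  have hCl : ∀ n j k, (C (n+j)).1 (2 ^ j * k) = (C n).1 k := by
    intro n j
    induction j with
    | zero => intro k; simp
    | succ j ih =>
      intro k
      rw [← add_assoc, pow_succ', mul_assoc, hCs, ih]
  have hCmono : ∀ n k n' k' : ℕ, (k : ℝ) / 2 ^ n ≤ (k' : ℝ) / 2 ^ n' → (C n).1 k ⊆ (C n').1 k' := by
    intro n k n' k' h
    rw [← hCl n n' k, ← hCl n' n k', add_comm n' n]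
    refine (C (n + n')).2.2.1 ?_
    rw [div_le_div_iff₀ (by positivity) (by positivity)] at h
    have : k * 2 ^ n' ≤ k' * 2 ^ n := by exact_mod_cast h
    linarith
  let F : Ω → ℕ × ℕ → ℝ := fun ω p => if ω ∈ (C p.1).1 p.2 then (p.2 : ℝ) / 2 ^ p.1 else 1
  have hFb : ∀ ω, BddBelow (range (F ω)) := by
    intro ω
    refine ⟨0, ?_⟩
    rintro _ ⟨p, rfl⟩
    simp only [F]
    split_ifs
    · positivity
    · norm_num
  have hset : ∀ t ≤ 1, {ω | (⨅ p, F ω p) < t} =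
      ⋃ p : {p : ℕ × ℕ // (p.2 : ℝ) / 2 ^ p.1 < t}, (C p.1.1).1 p.1.2 := by
    intro t ht
    ext ω
    simp only [mem_ofPred_eq, mem_iUnion, Subtype.exists, exists_prop]
    rw [ciInf_lt_iff (hFb ω)]
    constructor
    · rintro ⟨p, hp⟩
      simp only [F] at hp
      split_ifs at hp with hm
      · exact ⟨p, hp, hm⟩
      · linarith
    · rintro ⟨p, hp, hm⟩
      refine ⟨p, ?_⟩
      simp only [F, hm, if_true, hp]
  refine ⟨fun ω => ⨅ p, F ω p, ?_, ?_⟩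
  · refine Measurable.iInf fun p => ?_
    exact Measurable.ite ((C p.1).2.1 p.2) measurable_const measurable_const
  · intro t ht0 ht1
    rw [hset t ht1]
    have hdir : Directed (· ⊆ ·)
        (fun p : {p : ℕ × ℕ // (p.2 : ℝ) / 2 ^ p.1 < t} => (C p.1.1).1 p.1.2) := by
      intro p p'
      rcases le_total ((p.1.2 : ℝ) / 2 ^ p.1.1) ((p'.1.2 : ℝ) / 2 ^ p'.1.1) with h | h
      · exact ⟨p', hCmono _ _ _ _ h, subset_rfl⟩
      · exact ⟨p, subset_rfl, hCmono _ _ _ _ h⟩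
    have hval : ∀ p : {p : ℕ × ℕ // (p.2 : ℝ) / 2 ^ p.1 < t},
        μ.real ((C p.1.1).1 p.1.2) = (p.1.2 : ℝ) / 2 ^ p.1.1 := by
      intro p
      rw [(C p.1.1).2.2.2, min_eq_left (p.2.le.trans ht1)]
    refine le_antisymm ?_ ?_
    · rw [Measure.real, hdir.measure_iUnion]
      refine ENNReal.toReal_le_of_le_ofReal ht0 (iSup_le fun p => ?_)
      rw [← ofReal_measureReal, hval p]
      exact ENNReal.ofReal_le_ofReal p.2.le
    · refine le_of_forall_lt fun r hr => ?_
      rcases lt_or_ge r 0 with hr0 | hr0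
      · exact lt_of_lt_of_le hr0 measureReal_nonneg
      obtain ⟨n, hn⟩ := exists_pow_lt_of_lt_one (sub_pos.2 hr) (by norm_num : (1/2 : ℝ) < 1)
      have hp : (0 : ℝ) < 2 ^ n := by positivity
      set k := ⌊r * 2 ^ n⌋₊ + 1 with hk
      have hk1 : r * 2 ^ n < k := by rw [hk]; push_cast; exact Nat.lt_floor_add_one _
      have hk2 : (k : ℝ) ≤ r * 2 ^ n + 1 := by
        rw [hk]; push_cast; linarith [Nat.floor_le (show 0 ≤ r * 2 ^ n by positivity)]
      have hkt : (k : ℝ) / 2 ^ n < t := by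
        rw [div_lt_iff₀ hp]
        have : (1/2 : ℝ) ^ n * 2 ^ n = 1 := by rw [← mul_pow]; norm_num
        nlinarith
      have h5 : μ.real ((C n).1 k) = (k : ℝ) / 2 ^ n := hval ⟨(n, k), hkt⟩
      have h6 : μ.real ((C n).1 k) ≤ μ.real
          (⋃ p : {p : ℕ × ℕ // (p.2 : ℝ) / 2 ^ p.1 < t}, (C p.1.1).1 p.1.2) :=
        measureReal_mono (subset_iUnion
          (fun p : {p : ℕ × ℕ // (p.2 : ℝ) / 2 ^ p.1 < t} => (C p.1.1).1 p.1.2) ⟨(n, k), hkt⟩)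
      refine lt_of_lt_of_le ?_ h6
      rw [h5, lt_div_iff₀ hp]
      exact hk1

end Atomless

lemma exists_uniform_law {Ω : Type*} [MeasurableSpace Ω] {μ : Measure Ω}
    [IsProbabilityMeasure μ] (hat : AtomlessSpace μ) :
    ∃ U : Ω → ℝ, Measurable U ∧ Measure.map U μ = volume.restrict (Ioo (0:ℝ) 1) := by
  obtain ⟨U, hU, hUt⟩ := exists_uniform hat
  refine ⟨U, hU, ?_⟩
  have : IsProbabilityMeasure (Measure.map U μ) := Measure.isProbabilityMeasure_map hU.aemeasurable
  refine Measure.ext_of_Ici _ _ fun t => ?_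
  rw [Measure.map_apply hU measurableSet_Ici, Measure.restrict_apply measurableSet_Ici]
  have hc : U ⁻¹' Ici t = {ω | U ω < t}ᶜ := by ext; simp
  have hm : ∀ t, MeasurableSet {ω | U ω < t} := fun t => measurableSet_lt hU measurable_const
  rw [hc, ← ofReal_measureReal, probReal_compl_eq_one_sub (hm t)]
  rcases lt_or_ge t 0 with h0 | h0
  · have h1 : μ.real {ω | U ω < t} = 0 := by
      refine le_antisymm ?_ measureReal_nonneg
      rw [← hUt 0 le_rfl zero_le_one]
      exact measureReal_mono fun ω (hω : U ω < t) => hω.trans h0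
    have h2 : Ici t ∩ Ioo (0:ℝ) 1 = Ioo 0 1 := by
      rw [inter_eq_right]; intro x hx; exact h0.le.trans hx.1.le
    rw [h1, h2]; simp
  rcases le_or_gt t 1 with h1 | h1
  · rw [hUt t h0 h1]
    refine le_antisymm ?_ ?_
    · calc _ = volume (Ioo t 1) := by rw [Real.volume_Ioo]
        _ ≤ volume (Ici t ∩ Ioo (0:ℝ) 1) := measure_mono fun x hx => ⟨hx.1.le, h0.trans_lt hx.1, hx.2⟩
    · calc _ ≤ volume (Ico t 1) := measure_mono fun x hx => ⟨hx.1, hx.2.2⟩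
        _ = _ := by rw [Real.volume_Ico]
  · have h2 : μ.real {ω | U ω < t} = 1 := by
      refine le_antisymm measureReal_le_one ?_
      rw [← hUt 1 zero_le_one le_rfl]
      exact measureReal_mono fun ω (hω : U ω < 1) => hω.trans h1
    have h3 : Ici t ∩ Ioo (0:ℝ) 1 = ∅ := by
      ext x; simp only [mem_inter_iff, mem_Ici, mem_Ioo, mem_empty_iff_false, iff_false]
      rintro ⟨h4, h5, h6⟩; linarith
    rw [h2, h3]; simp

/-- The quantile function (set to `0` outside of `(0,1)`). -/
def qtl (ν : Measure ℝ) (u : ℝ) : ℝ :=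
  open Classical in if u ∈ Ioo (0:ℝ) 1 then sInf {t | u ≤ ν.real (Iic t)} else 0

lemma qtl_le_iff (ν : Measure ℝ) [IsProbabilityMeasure ν] {u : ℝ} (hu : u ∈ Ioo (0:ℝ) 1) (t : ℝ) :
    qtl ν u ≤ t ↔ u ≤ ν.real (Iic t) := by
  have hF : ∀ t, ν.real (Iic t) = ProbabilityTheory.cdf ν t := fun t =>
    (ProbabilityTheory.cdf_eq_real ν t).symm
  rw [qtl, if_pos hu]
  have hne : {t | u ≤ ν.real (Iic t)}.Nonempty := by
    have := (ProbabilityTheory.tendsto_cdf_atTop ν).eventually (lt_mem_nhds hu.2)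
    obtain ⟨t, ht⟩ := this.exists
    exact ⟨t, by rw [mem_ofPred_eq, hF]; exact ht.le⟩
  have hbdd : BddBelow {t | u ≤ ν.real (Iic t)} := by
    have := (ProbabilityTheory.tendsto_cdf_atBot ν).eventually (gt_mem_nhds hu.1)
    obtain ⟨t, ht⟩ := this.exists
    refine ⟨t, fun r hr => ?_⟩
    rw [mem_ofPred_eq, hF] at hr
    by_contra hcon
    have := ProbabilityTheory.monotone_cdf ν (not_le.1 hcon).le
    linarith
  constructor
  · intro h
    have hmono : ∀ t', t < t' → u ≤ ProbabilityTheory.cdf ν t' := by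
      intro t' ht'
      obtain ⟨r, hr, hrt⟩ := exists_lt_of_csInf_lt hne (h.trans_lt ht')
      rw [mem_ofPred_eq, hF] at hr
      exact hr.trans (ProbabilityTheory.monotone_cdf ν hrt.le)
    rw [hF]
    have hc : Tendsto (ProbabilityTheory.cdf ν) (𝓝[>] t) (𝓝 (ProbabilityTheory.cdf ν t)) :=
      ((ProbabilityTheory.cdf ν).right_continuous t).mono_left (nhdsWithin_mono _ Ioi_subset_Ici_self)
    exact ge_of_tendsto hc (eventually_mem_nhdsWithin.mono fun t' ht' => hmono t' ht')
  · intro h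
    exact csInf_le hbdd h

lemma qtl_measurable (ν : Measure ℝ) [IsProbabilityMeasure ν] : Measurable (qtl ν) := by
  refine measurable_of_Iic fun t => ?_
  have : qtl ν ⁻¹' Iic t = (Ioo (0:ℝ) 1 ∩ Iic (ν.real (Iic t))) ∪ ((Ioo (0:ℝ) 1)ᶜ ∩ {_u | 0 ≤ t}) := by
    ext u
    by_cases hu : u ∈ Ioo (0:ℝ) 1
    · simp [mem_preimage, qtl_le_iff ν hu t, hu, -mem_Ioo]
    · simp [mem_preimage, hu, qtl, -mem_Ioo]
  rw [this]
  exact (measurableSet_Ioo.inter measurableSet_Iic).union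
    (measurableSet_Ioo.compl.inter (MeasurableSet.const _))

lemma qtl_map (ν : Measure ℝ) [IsProbabilityMeasure ν] :
    Measure.map (qtl ν) (volume.restrict (Ioo (0:ℝ) 1)) = ν := by
  symm
  refine Measure.ext_of_Iic _ _ fun t => ?_
  rw [Measure.map_apply (qtl_measurable ν) measurableSet_Iic,
    Measure.restrict_apply (qtl_measurable ν measurableSet_Iic)]
  have h : qtl ν ⁻¹' Iic t ∩ Ioo (0:ℝ) 1 = Ioo (0:ℝ) 1 ∩ Iic (ν.real (Iic t)) := by
    ext u
    simp only [mem_inter_iff, mem_preimage, mem_Iic]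
    constructor
    · rintro ⟨h1, h2⟩; exact ⟨h2, (qtl_le_iff ν h2 t).1 h1⟩
    · rintro ⟨h1, h2⟩; exact ⟨(qtl_le_iff ν h1 t).2 h2, h1⟩
  rw [h, ← ofReal_measureReal]
  have h1 : ν.real (Iic t) ≤ 1 := measureReal_le_one
  refine le_antisymm ?_ ?_
  · calc _ = volume (Ioo 0 (ν.real (Iic t))) := by rw [Real.volume_Ioo, sub_zero]
      _ ≤ volume (Ioo (0:ℝ) 1 ∩ Iic (ν.real (Iic t))) := measure_mono fun x hx => ⟨⟨hx.1, hx.2.trans_le h1⟩, hx.2.le⟩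
  · calc _ ≤ volume (Ioc 0 (ν.real (Iic t))) := measure_mono fun x hx => ⟨hx.1.1, hx.2⟩
      _ = _ := by rw [Real.volume_Ioc, sub_zero]

lemma exists_null_pt (ν : Measure ℝ) [IsProbabilityMeasure ν] {a b : ℝ} (hab : a < b) :
    ∃ t ∈ Ioo a b, ν {t} = 0 := by
  have hc : {t | 0 < ν {t}}.Countable :=
    Measure.countable_meas_pos_of_disjoint_iUnion (fun t => measurableSet_singleton t)
      (fun i j hij => by simpa [Function.onFun] using hij)
  by_contra hcon
  push Not at hcon
  have : Ioo a b ⊆ {t | 0 < ν {t}} := fun t ht => pos_iff_ne_zero.2 (hcon t ht)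
  have h2 := hc.mono this
  exact absurd h2 (by
    intro h3
    have := h3.measure_zero volume
    rw [Real.volume_Ioo, ENNReal.ofReal_eq_zero] at this
    linarith)

lemma qtl_tendsto (νs : ℕ → ProbabilityMeasure ℝ) (ν : ProbabilityMeasure ℝ)
    (hlim : Tendsto νs atTop (𝓝 ν)) :
    ∀ᵐ u ∂(volume.restrict (Ioo (0:ℝ) 1)),
      Tendsto (fun k => qtl (νs k : Measure ℝ) u) atTop (𝓝 (qtl (ν : Measure ℝ) u)) := by
  have hmono : MonotoneOn (qtl (ν : Measure ℝ)) (Ioo (0:ℝ) 1) := by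
    intro u hu u' hu' huu
    rw [qtl_le_iff _ hu]
    exact huu.trans ((qtl_le_iff _ hu' _).1 le_rfl)
  have hcount := hmono.countable_not_continuousWithinAt_Ioi
  have hF : ∀ t, (ν : Measure ℝ) {t} = 0 → Tendsto (fun k => (νs k : Measure ℝ).real (Iic t)) atTop
      (𝓝 ((ν : Measure ℝ).real (Iic t))) := by
    intro t ht
    have := ProbabilityMeasure.tendsto_measure_of_null_frontier_of_tendsto' hlim (E := Iic t)
      (by rw [frontier_Iic]; exact ht)
    exact (ENNReal.tendsto_toReal (measure_ne_top _ _)).comp this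
  rw [ae_restrict_iff' measurableSet_Ioo]
  filter_upwards [hcount.ae_notMem volume] with u hu huI
  have hcont : ContinuousWithinAt (qtl (ν : Measure ℝ)) (Ioo 0 1 ∩ Ioi u) u := by
    by_contra hcon
    exact hu ⟨huI, hcon⟩
  rw [tendsto_order]
  constructor
  · intro a ha
    obtain ⟨t, ht, htn⟩ := exists_null_pt (ν : Measure ℝ) ha
    have h1 : (ν : Measure ℝ).real (Iic t) < u := by
      rw [← not_le, ← qtl_le_iff _ huI, not_le]; exact ht.2
    filter_upwards [(hF t htn).eventually (gt_mem_nhds h1)] with k hk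
    rw [← not_le, ← qtl_le_iff _ huI, not_le] at hk
    exact ht.1.trans hk
  · intro a ha
    have h1 : ∀ᶠ u' in 𝓝[Ioo 0 1 ∩ Ioi u] u, qtl (ν : Measure ℝ) u' < a :=
      hcont.eventually (gt_mem_nhds ha)
    have hnb : (𝓝[Ioo 0 1 ∩ Ioi u] u).NeBot := by
      have : Ioo 0 1 ∩ Ioi u = Ioo u 1 := by
        ext x; simp only [mem_inter_iff, mem_Ioo, mem_Ioi]
        constructor
        · rintro ⟨⟨_, h⟩, h'⟩; exact ⟨h', h⟩
        · rintro ⟨h, h'⟩; exact ⟨⟨huI.1.trans h, h'⟩, h⟩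
      rw [this]
      exact left_nhdsWithin_Ioo_neBot huI.2
    obtain ⟨u', hu'a, hu'I, hu'u⟩ := (h1.and eventually_mem_nhdsWithin).exists
    obtain ⟨t, ht, htn⟩ := exists_null_pt (ν : Measure ℝ) hu'a
    have h2 : u < (ν : Measure ℝ).real (Iic t) :=
      lt_of_lt_of_le hu'u ((qtl_le_iff _ hu'I _).1 ht.1.le)
    filter_upwards [(hF t htn).eventually (lt_mem_nhds h2)] with k hk
    exact ((qtl_le_iff _ huI _).2 hk.le).trans_lt ht.2

lemma R_tendsto {Ω : Type*} [MeasurableSpace Ω] {P : Measure Ω} {p : ℝ≥0∞} [Fact (1 ≤ p)]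
    (R : Lp ℝ p P → ℝ) (hconv : ConvexOn ℝ Set.univ R)
    (hmono : ∀ Y₁ Y₂ : Lp ℝ p P, (Y₁ : Ω → ℝ) ≤ᵐ[P] (Y₂ : Ω → ℝ) → R Y₁ ≤ R Y₂)
    (Ys : ℕ → Lp ℝ p P) (Y : Lp ℝ p P) (hY : Tendsto Ys atTop (𝓝 Y)) :
    Tendsto (fun k => R (Ys k)) atTop (𝓝 (R Y)) := by
  have hm : Monotone R := fun a b hab => hmono a b ((Lp.coeFn_le a b).2 hab)
  refine tendsto_of_subseq_tendsto fun ns hns => ?_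
  have hZ := hY.comp hns
  have hch : ∀ k : ℕ, ∃ j, ‖Ys (ns j) - Y‖ ≤ (1/2)^k / (k+1) := by
    intro k
    have hpos : (0:ℝ) < (1/2)^k / (k+1) := by positivity
    obtain ⟨j, hj⟩ := ((tendsto_iff_norm_sub_tendsto_zero.1 hZ).eventually
      (gt_mem_nhds hpos)).exists
    exact ⟨j, hj.le⟩
  choose ms hms using hch
  refine ⟨ms, ?_⟩
  set D : ℕ → Lp ℝ p P := fun k => |Ys (ns (ms k)) - Y| with hD
  have hsum : Summable fun k : ℕ => ((k:ℝ)+1) • D k := by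
    refine Summable.of_norm_bounded (g := fun k : ℕ => ((1/2:ℝ))^k) summable_geometric_two ?_
    intro k
    rw [norm_smul, hD, norm_abs_eq_norm, Real.norm_of_nonneg (by positivity)]
    have := hms k
    rw [le_div_iff₀ (by positivity)] at this
    linarith
  have hDnn : ∀ k, 0 ≤ D k := fun k => abs_nonneg _
  have hsnn : ∀ k : ℕ, 0 ≤ ((k:ℝ)+1) • D k := by
    intro k
    have : ((k:ℝ)+1) • D k = (k+1) • D k := by
      rw [← Nat.cast_smul_eq_nsmul ℝ]; push_cast; rfl
    rw [this]
    exact nsmul_nonneg (hDnn k) _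
  set W := ∑' k : ℕ, ((k:ℝ)+1) • D k with hW
  have hle : ∀ k : ℕ, ((k:ℝ)+1) • D k ≤ W := fun k => hsum.le_tsum k fun j _ => hsnn j
  have hup : ∀ k : ℕ, R (Y + D k) ≤ R Y + (1/((k:ℝ)+1)) * (R (Y + W) - R Y) := by
    intro k
    have hk : (0:ℝ) < (k:ℝ)+1 := by positivity
    have ht1 : 1/((k:ℝ)+1) ≤ 1 := by rw [div_le_one hk]; linarith [k.cast_nonneg (α := ℝ)]
    have h1 := hconv.2 (mem_univ Y) (mem_univ (Y + ((k:ℝ)+1) • D k))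
      (sub_nonneg.2 ht1) (by positivity : 0 ≤ 1/((k:ℝ)+1)) (by ring)
    have h2 : (1 - 1/((k:ℝ)+1)) • Y + (1/((k:ℝ)+1)) • (Y + ((k:ℝ)+1) • D k) = Y + D k := by
      rw [smul_add, smul_smul, one_div_mul_cancel hk.ne', one_smul, ← add_assoc, ← add_smul]
      simp
    rw [h2] at h1
    have h3 : R (Y + ((k:ℝ)+1) • D k) ≤ R (Y + W) := hm (by gcongr; exact hle k)
    simp only [smul_eq_mul] at h1
    have h4 := mul_le_mul_of_nonneg_left h3 (by positivity : 0 ≤ 1/((k:ℝ)+1))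
    linarith
  have hlow : ∀ k : ℕ, 2 * R Y - R (Y + D k) ≤ R (Y - D k) := by
    intro k
    have h1 := hconv.2 (mem_univ (Y - D k)) (mem_univ (Y + D k))
      (by norm_num : (0:ℝ) ≤ 1/2) (by norm_num : (0:ℝ) ≤ 1/2) (by norm_num)
    have h2 : (1/2:ℝ) • (Y - D k) + (1/2:ℝ) • (Y + D k) = Y := by
      rw [← smul_add, sub_add_add_cancel, ← two_smul ℝ, smul_smul]; norm_num
    rw [h2] at h1
    simp only [smul_eq_mul] at h1
    linarith
  have hlim : Tendsto (fun k : ℕ => (1/((k:ℝ)+1)) * (R (Y + W) - R Y)) atTop (𝓝 0) := by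
    simpa using tendsto_one_div_add_atTop_nhds_zero_nat.mul_const (R (Y + W) - R Y)
  have hlo : Tendsto (fun k : ℕ => R Y - (1/((k:ℝ)+1)) * (R (Y + W) - R Y)) atTop (𝓝 (R Y)) := by
    simpa using hlim.const_sub (R Y)
  have hhi : Tendsto (fun k : ℕ => R Y + (1/((k:ℝ)+1)) * (R (Y + W) - R Y)) atTop (𝓝 (R Y)) := by
    simpa using hlim.const_add (R Y)
  refine tendsto_of_tendsto_of_tendsto_of_le_of_le hlo hhi ?_ ?_
  · intro k
    have h1 : Y - D k ≤ Ys (ns (ms k)) := by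
      rw [sub_le_comm]
      refine le_trans ?_ (neg_le_abs _)
      rw [neg_sub]
    have := hm h1
    have h2 := hup k
    have h3 := hlow k
    simp only
    linarith
  · intro k
    have h1 : Ys (ns (ms k)) ≤ Y + D k := by
      rw [← sub_le_iff_le_add']; exact le_abs_self _
    exact (hm h1).trans (hup k)

lemma tail_bound {s : ℕ} {p : ℝ≥0∞} (hp1 : 1 ≤ p) (hptop : p ≠ ⊤) (μ : Measure (Fin s → ℝ))
    (F : (Fin s → ℝ) → ℝ) {B a : ℝ} (hB : 0 < B) (ha : 1 ≤ a)
    (hF : ∀ z, |F z| ≤ B * (1 + ‖z‖)) {ε : ℝ} (hε : 0 < ε)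
    (hμ : ∫⁻ z in {z : Fin s → ℝ | a ≤ ‖z‖}, ENNReal.ofReal (‖z‖ ^ p.toReal) ∂μ
      ≤ ENNReal.ofReal ((ε / (2 * B)) ^ p.toReal)) :
    eLpNorm ({z | B * (1 + a) ≤ ‖F z‖}.indicator F) p μ ≤ ENNReal.ofReal ε := by
  have hp0 : p ≠ 0 := (zero_lt_one.trans_le hp1).ne'
  have hpr : 0 < p.toReal := ENNReal.toReal_pos hp0 hptop
  have hms : MeasurableSet {z : Fin s → ℝ | a ≤ ‖z‖} :=
    measurableSet_le measurable_const measurable_norm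
  have h1 : eLpNorm ({z | B * (1 + a) ≤ ‖F z‖}.indicator F) p μ
      ≤ eLpNorm ((2 * B) • ({z : Fin s → ℝ | a ≤ ‖z‖}.indicator (fun z => z))) p μ := by
    refine eLpNorm_mono fun z => ?_
    by_cases hz : B * (1 + a) ≤ ‖F z‖
    · have h2 : a ≤ ‖z‖ := by
        have := hz.trans (hF z)
        have := le_of_mul_le_mul_left this hB
        linarith
      have h4 : ‖(2 * B : ℝ)‖ = 2 * B := Real.norm_of_nonneg (by positivity)
      rw [indicator_of_mem (by exact hz), Pi.smul_apply, indicator_of_mem (by exact h2), norm_smul, h4,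
        Real.norm_eq_abs]
      refine (hF z).trans ?_
      nlinarith
    · rw [indicator_of_notMem (by exact hz), norm_zero]; positivity
  refine h1.trans ?_
  rw [eLpNorm_const_smul, eLpNorm_indicator_eq_eLpNorm_restrict hms,
    eLpNorm_eq_lintegral_rpow_enorm_toReal hp0 hptop]
  have h3 : ∫⁻ z in {z : Fin s → ℝ | a ≤ ‖z‖}, ‖z‖ₑ ^ p.toReal ∂μ
      = ∫⁻ z in {z : Fin s → ℝ | a ≤ ‖z‖}, ENNReal.ofReal (‖z‖ ^ p.toReal) ∂μ := by
    refine lintegral_congr fun z => ?_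
    rw [← ofReal_norm, ENNReal.ofReal_rpow_of_nonneg (norm_nonneg _) hpr.le]
  rw [h3]
  calc ‖2 * B‖ₑ * (∫⁻ z in {z : Fin s → ℝ | a ≤ ‖z‖}, ENNReal.ofReal (‖z‖ ^ p.toReal) ∂μ) ^ (1 / p.toReal)
      ≤ ‖2 * B‖ₑ * (ENNReal.ofReal ((ε / (2 * B)) ^ p.toReal)) ^ (1 / p.toReal) := by gcongr
    _ = ENNReal.ofReal ε := by
      rw [ENNReal.ofReal_rpow_of_nonneg (by positivity) (by positivity), ← Real.rpow_mul (by positivity),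
        mul_one_div_cancel hpr.ne', Real.rpow_one, ← ofReal_norm,
        Real.norm_of_nonneg (by positivity), ← ENNReal.ofReal_mul (by positivity)]
      congr 1
      field_simp

lemma memLp_growth {s : ℕ} {p : ℝ≥0∞} (hp1 : 1 ≤ p) (hptop : p ≠ ⊤) (μ : Measure (Fin s → ℝ))
    [IsProbabilityMeasure μ] (F : (Fin s → ℝ) → ℝ) (hFc : Continuous F) {B : ℝ}
    (hF : ∀ z, |F z| ≤ B * (1 + ‖z‖))
    (hμ : ∫⁻ z, ENNReal.ofReal (‖z‖ ^ p.toReal) ∂μ < ⊤) : MemLp F p μ := by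
  have hp0 : p ≠ 0 := (zero_lt_one.trans_le hp1).ne'
  have hpr : 0 < p.toReal := ENNReal.toReal_pos hp0 hptop
  have h1 : MemLp (fun z : Fin s → ℝ => ‖z‖) p μ := by
    refine ⟨continuous_norm.aestronglyMeasurable, ?_⟩
    rw [eLpNorm_lt_top_iff_lintegral_rpow_enorm_lt_top hp0 hptop]
    refine lt_of_eq_of_lt (lintegral_congr fun z => ?_) hμ
    rw [enorm_norm, ← ofReal_norm, ENNReal.ofReal_rpow_of_nonneg (norm_nonneg _) hpr.le]
  have h2 : MemLp (fun z : Fin s → ℝ => B * (1 + ‖z‖)) p μ :=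
    ((memLp_const (1:ℝ)).add h1).const_mul B
  exact h2.mono' hFc.aestronglyMeasurable (Eventually.of_forall hF)

lemma joint_conv {n s : ℕ} {Ω : Type*} [MeasurableSpace Ω] {P : Measure Ω} [IsProbabilityMeasure P]
    (hat : AtomlessSpace P) {p : ℝ≥0∞} [hp1 : Fact (1 ≤ p)] (hptop : p ≠ ⊤)
    (F : (Fin n → ℝ) → (Fin s → ℝ) → ℝ) (hFc : Continuous fun w : (Fin n → ℝ) × (Fin s → ℝ) => F w.1 w.2)
    {K : ℝ} (hK : 0 ≤ K) (hF : ∀ x z z', |F x z - F x z'| ≤ K * ‖z - z'‖)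
    (M : Set (ProbabilityMeasure (Fin s → ℝ)))
    (hMmom : ∀ μ ∈ M,
      ∫⁻ z, ENNReal.ofReal (‖z‖ ^ p.toReal) ∂(μ : Measure (Fin s → ℝ)) < ⊤)
    (hLUI : LocUnifIntegrating p.toReal M)
    (xs : ℕ → Fin n → ℝ) (x : Fin n → ℝ) (hx : Tendsto xs atTop (𝓝 x))
    (μs : ℕ → ProbabilityMeasure (Fin s → ℝ)) (μ : ProbabilityMeasure (Fin s → ℝ))
    (hμ : Tendsto μs atTop (𝓝 μ)) (hμsM : ∀ k, μs k ∈ M) (hμM : μ ∈ M) :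
    ∃ (Ys : ℕ → Lp ℝ p P) (Y : Lp ℝ p P), Tendsto Ys atTop (𝓝 Y) ∧
      (∀ k, Measure.map (Ys k : Ω → ℝ) P = Measure.map (F (xs k)) (μs k : Measure (Fin s → ℝ))) ∧
      Measure.map (Y : Ω → ℝ) P = Measure.map (F x) (μ : Measure (Fin s → ℝ)) := by
  obtain ⟨U, hUm, hU⟩ := exists_uniform_law hat
  have hFx : ∀ x, Continuous (F x) := fun x => hFc.comp (Continuous.prodMk_right x)
  -- laws
  set ν : (Fin n → ℝ) → ProbabilityMeasure (Fin s → ℝ) → ProbabilityMeasure ℝ :=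
    fun x μ => μ.map (hFx x).measurable.aemeasurable with hν
  have hνc : ∀ x μ, (ν x μ : Measure ℝ) = Measure.map (F x) (μ : Measure (Fin s → ℝ)) :=
    fun x μ => rfl
  have hνlim : Tendsto (fun k => ν (xs k) (μs k)) atTop (𝓝 (ν x μ)) := by
    have h1 : Tendsto (fun k => (diracProba (xs k)).prod (μs k)) atTop (𝓝 ((diracProba x).prod μ)) :=
      (ProbabilityMeasure.continuous_prod.tendsto (diracProba x, μ)).comp
        (((continuous_diracProba.tendsto x).comp hx).prodMk_nhds hμ)
    have h2 := ProbabilityMeasure.tendsto_map_of_tendsto_of_continuous _ _ h1 hFc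
    have h3 : ∀ x μ, ((diracProba x).prod μ).map hFc.measurable.aemeasurable = ν x μ := by
      intro x μ
      apply Subtype.ext
      change Measure.map (fun w : (Fin n → ℝ) × (Fin s → ℝ) => F w.1 w.2)
        ((Measure.dirac x).prod (μ : Measure (Fin s → ℝ))) = Measure.map (F x) _
      rw [Measure.dirac_prod, Measure.map_map hFc.measurable (by fun_prop)]
      rfl
    simpa only [h3] using h2
  set Z : (Fin n → ℝ) → ProbabilityMeasure (Fin s → ℝ) → Ω → ℝ :=
    fun x μ ω => qtl (ν x μ : Measure ℝ) (U ω) with hZ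
  have hZm : ∀ x μ, Measurable (Z x μ) := fun x μ => (qtl_measurable _).comp hUm
  have hZmap : ∀ x μ, Measure.map (Z x μ) P = Measure.map (F x) (μ : Measure (Fin s → ℝ)) := by
    intro x μ
    have : Z x μ = qtl (ν x μ : Measure ℝ) ∘ U := rfl
    rw [this, ← Measure.map_map (qtl_measurable _) hUm, hU, qtl_map, hνc]
  have hae : ∀ᵐ ω ∂P, Tendsto (fun k => Z (xs k) (μs k) ω) atTop (𝓝 (Z x μ ω)) := by
    have := qtl_tendsto _ _ hνlim
    rw [← hU] at this
    exact ae_of_ae_map hUm.aemeasurable this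
  -- growth
  have hgr : ∃ B : ℝ, 0 < B ∧ (∀ z, |F x z| ≤ B * (1 + ‖z‖)) ∧ ∀ k z, |F (xs k) z| ≤ B * (1 + ‖z‖) := by
    have h1 : Tendsto (fun k => F (xs k) 0) atTop (𝓝 (F x 0)) :=
      (hFc.tendsto (x, 0)).comp (hx.prodMk_nhds tendsto_const_nhds)
    obtain ⟨B, hB⟩ := (Metric.isBounded_range_of_tendsto _ h1).exists_norm_le
    have hB' : ∀ k, |F (xs k) 0| ≤ B := fun k => hB _ ⟨k, rfl⟩
    have hBx : |F x 0| ≤ B := le_of_tendsto' h1.abs hB'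
    have hB0 : 0 ≤ B := (abs_nonneg _).trans hBx
    have key : ∀ x', |F x' 0| ≤ B → ∀ z, |F x' z| ≤ (B + K + 1) * (1 + ‖z‖) := by
      intro x' hx' z
      have h2 := hF x' z 0
      rw [sub_zero] at h2
      have h3 : |F x' z| ≤ |F x' z - F x' 0| + |F x' 0| := by
        have := abs_add_le (F x' z - F x' 0) (F x' 0)
        simpa using this
      have h4 := norm_nonneg z
      nlinarith [mul_nonneg hB0 h4]
    exact ⟨B + K + 1, by positivity, key x hBx, fun k => key _ (hB' k)⟩
  obtain ⟨B, hB, hBx, hBk⟩ := hgr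
  have hZLp : ∀ x μ, (∀ z, |F x z| ≤ B * (1 + ‖z‖)) → μ ∈ M → MemLp (Z x μ) p P := by
    intro x μ h1 h2
    have h3 := memLp_growth hp1.out hptop (μ : Measure (Fin s → ℝ)) (F x) (hFx x) h1 (hMmom μ h2)
    have h4 : MemLp (fun r : ℝ => r) p (Measure.map (F x) (μ : Measure (Fin s → ℝ))) := by
      rw [memLp_map_measure_iff (by fun_prop) (hFx x).measurable.aemeasurable]
      exact h3
    rw [← hZmap, memLp_map_measure_iff (by fun_prop) (hZm x μ).aemeasurable] at h4
    exact h4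
  have hZk : ∀ k, MemLp (Z (xs k) (μs k)) p P := fun k => hZLp _ _ (hBk k) (hμsM k)
  have hZx : MemLp (Z x μ) p P := hZLp _ _ hBx hμM
  have hUI : UnifIntegrable (fun k => Z (xs k) (μs k)) p P := by
    refine unifIntegrable_of hp1.out hptop (fun k => (hZm _ _).aestronglyMeasurable) fun ε hε => ?_
    have hη : 0 < (ε / (2 * B)) ^ p.toReal := by positivity
    obtain ⟨N, hNo, hμN, hN⟩ := hLUI μ hμM ((ε / (2 * B)) ^ p.toReal / 2) (by positivity)
    have hN2 := hN.trans_lt ((ENNReal.ofReal_lt_ofReal_iff hη).2 (half_lt_self hη))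
    obtain ⟨a, ha⟩ := iInf_lt_iff.1 hN2
    obtain ⟨k₀, hk₀⟩ := eventually_atTop.1 (hμ.eventually (hNo.mem_nhds hμN))
    have hind : ∀ k, ∃ C : ℝ, eLpNorm ({ω | C ≤ ‖Z (xs k) (μs k) ω‖₊}.indicator (Z (xs k) (μs k))) p P
        ≤ ENNReal.ofReal ε := fun k =>
      (hZk k).eLpNorm_indicator_norm_ge_le (hZm _ _).stronglyMeasurable hε
    choose C hC using hind
    obtain ⟨C', hC'⟩ := ((Finset.range k₀).image C).exists_le
    have hmonoC : ∀ k (C₁ C₂ : ℝ), C₁ ≤ C₂ →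
        eLpNorm ({ω | C₂ ≤ ‖Z (xs k) (μs k) ω‖}.indicator (Z (xs k) (μs k))) p P ≤
        eLpNorm ({ω | C₁ ≤ ‖Z (xs k) (μs k) ω‖}.indicator (Z (xs k) (μs k))) p P := by
      intro k C₁ C₂ h12
      refine eLpNorm_mono fun ω => ?_
      rw [norm_indicator_eq_indicator_norm, norm_indicator_eq_indicator_norm]
      exact indicator_le_indicator_of_subset (fun ω hω => h12.trans hω) (fun _ => norm_nonneg _) ω
    set a' := max a 1 with ha'
    refine ⟨(max C' (B * (1 + a'))).toNNReal, fun k => ?_⟩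
    have hpos : 0 ≤ max C' (B * (1 + a')) :=
      le_max_of_le_right (mul_nonneg hB.le (by have := le_max_right a 1; linarith))
    have hset : {ω | (max C' (B * (1 + a'))).toNNReal ≤ ‖Z (xs k) (μs k) ω‖₊} =
        {ω | max C' (B * (1 + a')) ≤ ‖Z (xs k) (μs k) ω‖} := by
      ext ω
      simp only [mem_ofPred_eq]
      rw [← NNReal.coe_le_coe, Real.coe_toNNReal _ hpos, coe_nnnorm]
    rw [hset]
    rcases lt_or_ge k k₀ with hk | hk
    · refine (hmonoC k (C k) _ ?_).trans (hC k)
      exact le_max_of_le_left (hC' _ (Finset.mem_image_of_mem _ (Finset.mem_range.2 hk)))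
    · refine (hmonoC k (B * (1 + a')) _ (le_max_right _ _)).trans ?_
      have hms : MeasurableSet {r : ℝ | B * (1 + a') ≤ ‖r‖} :=
        measurableSet_le measurable_const measurable_norm
      have hmi : Measurable ({r : ℝ | B * (1 + a') ≤ ‖r‖}.indicator (fun r => r)) :=
        measurable_id.indicator hms
      have e1 := eLpNorm_map_measure (p := p) (μ := P) hmi.aestronglyMeasurable
        (hZm (xs k) (μs k)).aemeasurable
      have e2 := eLpNorm_map_measure (p := p) (μ := (μs k : Measure (Fin s → ℝ)))
        hmi.aestronglyMeasurable (hFx (xs k)).measurable.aemeasurable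
      rw [hZmap, e2] at e1
      have e3 := tail_bound hp1.out hptop (μs k : Measure (Fin s → ℝ)) (F (xs k)) hB
        (le_max_right a 1) (hBk k) hε (by
          refine le_trans (lintegral_mono_set (t := {z | a ≤ ‖z‖}) ?_) (le_trans ?_ ha.le)
          · exact fun z hz => (le_max_left a 1).trans hz
          · exact le_iSup₂ (f := fun (ν : ProbabilityMeasure (Fin s → ℝ)) (_ : ν ∈ M ∩ N) =>
              ∫⁻ z in {z : Fin s → ℝ | a ≤ ‖z‖}, ENNReal.ofReal (‖z‖ ^ p.toReal)
                ∂(ν : Measure (Fin s → ℝ))) (μs k) ⟨hμsM k, hk₀ k hk⟩)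
      refine le_trans (le_of_eq ?_) e3
      exact e1.symm
  have hlim := tendsto_Lp_finite_of_tendsto_ae hp1.out hptop
    (fun k => (hZm (xs k) (μs k)).aestronglyMeasurable) hZx hUI hae
  refine ⟨fun k => (hZk k).toLp, hZx.toLp, ?_, fun k => ?_, ?_⟩
  · exact (Lp.tendsto_Lp_iff_tendsto_eLpNorm'' _ hZk _ hZx).2 hlim
  · rw [Measure.map_congr (hZk k).coeFn_toLp, hZmap]
  · rw [Measure.map_congr hZx.coeFn_toLp, hZmap]

lemma berge {n s : ℕ} (M : Set (ProbabilityMeasure (Fin s → ℝ)))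
    (Q : (Fin n → ℝ) → ProbabilityMeasure (Fin s → ℝ) → ℝ)
    (hQ : ∀ (xs : ℕ → Fin n → ℝ) (x : Fin n → ℝ) (μs : ℕ → ProbabilityMeasure (Fin s → ℝ))
      (μ : ProbabilityMeasure (Fin s → ℝ)), Tendsto xs atTop (𝓝 x) → Tendsto μs atTop (𝓝 μ) →
      (∀ k, μs k ∈ M) → μ ∈ M → Tendsto (fun k => Q (xs k) (μs k)) atTop (𝓝 (Q x μ)))
    (L : Set (Fin n → ℝ)) (hL : IsCompact L) (V : Set (Fin n → ℝ)) (hVopen : IsOpen V)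
    (φV : ProbabilityMeasure (Fin s → ℝ) → ℝ)
    (hφV : ∀ μ, φV μ = sInf ((fun x => Q x μ) '' L))
    (ΦV : ProbabilityMeasure (Fin s → ℝ) → Set (Fin n → ℝ))
    (hΦV : ∀ μ, ΦV μ = {x ∈ L | ∀ x' ∈ L, Q x μ ≤ Q x' μ})
    (μ₀ : ProbabilityMeasure (Fin s → ℝ)) (hμ₀ : μ₀ ∈ M)
    (hCLM : (ΦV μ₀).Nonempty ∧ ΦV μ₀ ⊆ V) :
    ContinuousWithinAt φV M μ₀ ∧
    (∀ O : Set (Fin n → ℝ), IsOpen O → ΦV μ₀ ⊆ O →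
      ∃ N : Set (ProbabilityMeasure (Fin s → ℝ)), IsOpen N ∧ μ₀ ∈ N ∧
        ∀ μ ∈ N, μ ∈ M → ΦV μ ⊆ O) ∧
    (∃ U : Set (ProbabilityMeasure (Fin s → ℝ)), IsOpen U ∧ μ₀ ∈ U ∧
      ∀ μ ∈ U, μ ∈ M → (ΦV μ).Nonempty ∧ ΦV μ ⊆ V) := by
  have hcont : Continuous fun w : M × (Fin n → ℝ) => Q w.2 (w.1 : ProbabilityMeasure (Fin s → ℝ)) := by
    rw [continuous_iff_seqContinuous]
    intro w w₀ hw
    exact hQ _ _ _ _ ((continuous_snd.tendsto w₀).comp hw)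
      (((continuous_subtype_val.comp continuous_fst).tendsto w₀).comp hw)
      (fun k => (w k).1.2) w₀.1.2
  have hQx : ∀ μ ∈ M, Continuous fun x => Q x μ := fun μ hμ =>
    hcont.comp (Continuous.prodMk_right (⟨μ, hμ⟩ : M))
  obtain ⟨⟨x₀, hx₀⟩, hsub⟩ := hCLM
  have hx₀' := hx₀
  rw [hΦV] at hx₀'
  have hne : L.Nonempty := ⟨x₀, hx₀'.1⟩
  have hφc : Continuous fun μ : M => φV (μ : ProbabilityMeasure (Fin s → ℝ)) := by
    simp only [hφV]
    exact hL.continuous_sInf (f := fun (μ : M) x => Q x (μ : ProbabilityMeasure (Fin s → ℝ))) hcont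
  have hd : ∀ O : Set (Fin n → ℝ), IsOpen O → ΦV μ₀ ⊆ O →
      ∃ N : Set (ProbabilityMeasure (Fin s → ℝ)), IsOpen N ∧ μ₀ ∈ N ∧
        ∀ μ ∈ N, μ ∈ M → ΦV μ ⊆ O := by
    intro O hO hsubO
    have hKO : IsCompact (L \ O) := hL.diff hO
    have h1 : ∀ᶠ μ : M in 𝓝 ⟨μ₀, hμ₀⟩, ∀ x ∈ L \ O,
        φV (μ : ProbabilityMeasure (Fin s → ℝ)) < Q x (μ : ProbabilityMeasure (Fin s → ℝ)) := by
      refine hKO.eventually_forall_of_forall_eventually fun x hx => ?_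
      have h2 : φV μ₀ < Q x μ₀ := by
        by_contra hcon
        push Not at hcon
        refine hx.2 (hsubO ?_)
        rw [hΦV]
        refine ⟨hx.1, fun x' hx' => hcon.trans ?_⟩
        rw [hφV]
        refine csInf_le ⟨Q x₀ μ₀, ?_⟩ ⟨x', hx', rfl⟩
        rintro _ ⟨y, hy, rfl⟩
        exact hx₀'.2 y hy
      have h3 : Continuous fun w : M × (Fin n → ℝ) => φV (w.1 : ProbabilityMeasure (Fin s → ℝ)) :=
        hφc.comp continuous_fst
      exact (isOpen_lt h3 hcont).mem_nhds (x := ((⟨μ₀, hμ₀⟩ : M), x)) h2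
    obtain ⟨S, hS, hSo, hS0⟩ := eventually_nhds_iff.1 h1
    obtain ⟨N, hN, rfl⟩ := isOpen_induced_iff.1 hSo
    refine ⟨N, hN, hS0, fun μ hμ hμM x hx => ?_⟩
    rw [hΦV] at hx
    by_contra hxO
    have h2 := hS ⟨μ, hμM⟩ hμ x ⟨hx.1, hxO⟩
    have h3 : Q x μ ≤ φV μ := by
      rw [hφV]
      refine le_csInf (hne.image _) ?_
      rintro _ ⟨y, hy, rfl⟩
      exact hx.2 y hy
    exact absurd h2 (not_lt.2 h3)
  refine ⟨?_, hd, ?_⟩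
  · rw [continuousWithinAt_iff_continuousAt_restrict _ hμ₀]
    exact hφc.continuousAt
  · obtain ⟨N, hN, hN0, hNM⟩ := hd V hVopen hsub
    refine ⟨N, hN, hN0, fun μ hμ hμM => ⟨?_, hNM μ hμ hμM⟩⟩
    obtain ⟨x, hx, hmin⟩ := hL.exists_isMinOn hne (hQx μ hμM).continuousOn
    exact ⟨x, by rw [hΦV]; exact ⟨hx, fun x' hx' => hmin hx'⟩⟩

theorem CLM_stability {n m s : ℕ}
    (c : Fin n → ℝ) (q d : Fin m → ℝ)
    (A : Matrix (Fin s) (Fin m) ℝ) (T : Matrix (Fin s) (Fin n) ℝ)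
    (hdom : (domf c q d A T).Nonempty) (hP : Pfeas A T = Set.univ)
    {Ω : Type*} [MeasureSpace Ω] [IsProbabilityMeasure (volume : Measure Ω)]
    (hatomless : AtomlessSpace (volume : Measure Ω))
    (p : ℝ≥0∞) [hp1 : Fact (1 ≤ p)] (hptop : p ≠ ⊤)
    (R : Lp ℝ p (volume : Measure Ω) → ℝ)
    (hLI : ∀ Y₁ Y₂ : Lp ℝ p (volume : Measure Ω),
      Measure.map (Y₁ : Ω → ℝ) volume = Measure.map (Y₂ : Ω → ℝ) volume → R Y₁ = R Y₂)
    (hconv : ConvexOn ℝ Set.univ R)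
    (hmono : ∀ Y₁ Y₂ : Lp ℝ p (volume : Measure Ω),
      (Y₁ : Ω → ℝ) ≤ᵐ[volume] (Y₂ : Ω → ℝ) → R Y₁ ≤ R Y₂)
    (X : Set (Fin n → ℝ)) (hXpoly : IsPolyhedron X) (hXne : X.Nonempty)
    (M : Set (ProbabilityMeasure (Fin s → ℝ)))
    (hMmom : ∀ μ ∈ M,
      ∫⁻ z, ENNReal.ofReal (‖z‖ ^ p.toReal) ∂(μ : Measure (Fin s → ℝ)) < ⊤)
    (hLUI : LocUnifIntegrating p.toReal M)
    (Q : (Fin n → ℝ) → ProbabilityMeasure (Fin s → ℝ) → ℝ)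
    (hQ : ∀ x μ, μ ∈ M → ∀ Y : Lp ℝ p (volume : Measure Ω),
      Measure.map (Y : Ω → ℝ) volume
        = Measure.map (fun z => (fE c q d A T x z).toReal) (μ : Measure (Fin s → ℝ)) →
      Q x μ = R Y)
    (V : Set (Fin n → ℝ)) (hVopen : IsOpen V) (hVbdd : Bornology.IsBounded V)
    (hVne : V ≠ Set.univ)
    (φV : ProbabilityMeasure (Fin s → ℝ) → ℝ)
    (hφV : ∀ μ, φV μ = sInf ((fun x => Q x μ) '' (X ∩ closure V)))
    (ΦV : ProbabilityMeasure (Fin s → ℝ) → Set (Fin n → ℝ))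
    (hΦV : ∀ μ, ΦV μ =
      {x ∈ X ∩ closure V | ∀ x' ∈ X ∩ closure V, Q x μ ≤ Q x' μ})
    (μ₀ : ProbabilityMeasure (Fin s → ℝ)) (hμ₀ : μ₀ ∈ M)
    (hCLM : (ΦV μ₀).Nonempty ∧ ΦV μ₀ ⊆ V) :
    -- (c) the localized optimal value function is weakly continuous at `μ₀` relative to `M`
    ContinuousWithinAt φV M μ₀ ∧
    -- (d) Berge upper semicontinuity of the localized solution set mapping at `μ₀`
    (∀ O : Set (Fin n → ℝ), IsOpen O → ΦV μ₀ ⊆ O →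
      ∃ N : Set (ProbabilityMeasure (Fin s → ℝ)), IsOpen N ∧ μ₀ ∈ N ∧
        ∀ μ ∈ N, μ ∈ M → ΦV μ ⊆ O) ∧
    -- (e) CLM property persists on a weakly open neighbourhood of `μ₀`
    (∃ U : Set (ProbabilityMeasure (Fin s → ℝ)), IsOpen U ∧ μ₀ ∈ U ∧
      ∀ μ ∈ U, μ ∈ M → (ΦV μ).Nonempty ∧ ΦV μ ⊆ V) := by
  obtain ⟨g, K, hK, hg, hfE⟩ := fE_structure c q d A T hdom hP
  have hgc : Continuous g := by
    have : LipschitzWith ⟨K, hK⟩ g := LipschitzWith.of_dist_le_mul fun h h' => by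
      rw [Real.dist_eq, dist_eq_norm]; exact hg h h'
    exact this.continuous
  have hfF : ∀ x z, (fE c q d A T x z).toReal = c ⬝ᵥ x + g (T.mulVec x + z) := fun x z => by
    rw [hfE, EReal.toReal_coe]
  have hX : IsClosed X := by
    obtain ⟨k, B, b, rfl⟩ := hXpoly
    exact isClosed_le (Continuous.matrix_mulVec continuous_const continuous_id) continuous_const
  have hL : IsCompact (X ∩ closure V) := hVbdd.isCompact_closure.inter_left hX
  refine berge M Q ?_ _ hL V hVopen φV hφV ΦV hΦV μ₀ hμ₀ hCLM
  intro xs x μs μ hx hμ hμs hμM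
  have hFc : Continuous fun w : (Fin n → ℝ) × (Fin s → ℝ) =>
      (fun x z => c ⬝ᵥ x + g (T.mulVec x + z)) w.1 w.2 := by
    refine Continuous.add (Continuous.dotProduct continuous_const continuous_fst) (hgc.comp ?_)
    exact (Continuous.matrix_mulVec continuous_const continuous_fst).add continuous_snd
  obtain ⟨Ys, Y, hY, hYs, hYx⟩ := joint_conv hatomless hptop
    (fun x z => c ⬝ᵥ x + g (T.mulVec x + z)) hFc hK
    (fun x z z' => by
      have := hg (T.mulVec x + z) (T.mulVec x + z')
      simpa using this) M hMmom hLUI xs x hx μs μ hμ hμs hμM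
  have e1 : ∀ k, Q (xs k) (μs k) = R (Ys k) := fun k =>
    hQ _ _ (hμs k) _ (by simp only [hfF]; exact hYs k)
  have e2 : Q x μ = R Y := hQ _ _ hμM _ (by simp only [hfF]; exact hYx)
  simp only [e1, e2]
  exact R_tendsto R hconv hmono Ys Y hY
end
end

section
/- Assume dom f ≠ ∅ and P = ℝⁿ × ℝˢ. Then the multifunction C₁ is closed with respect to the topology of weak convergence: for any sequences {μ_l} of Borel probability measures on ℝˢ and {x_l} ⊆ ℝⁿ with μ_l → μ weakly, x_l → x, and x_l ∈ C₁(μ_l) for all l ∈ ℕ, it holds that x ∈ C₁(μ). -/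
open MeasureTheory Matrix Set Topology Filter
open scoped ENNReal NNReal

noncomputable section

/-- Feasible set under first-order stochastic dominance constraints. -/
def C1 {n m s : ℕ} (c : Fin n → ℝ) (q d : Fin m → ℝ) (A : Matrix (Fin s) (Fin m) ℝ)
    (T : Matrix (Fin s) (Fin n) ℝ) (X : Set (Fin n → ℝ)) (ν : Measure ℝ)
    (μ : ProbabilityMeasure (Fin s → ℝ)) : Set (Fin n → ℝ) :=
  {x ∈ X | ∀ β : ℝ,
    ν (Set.Iic β) ≤ (μ : Measure (Fin s → ℝ)) {z | fE c q d A T x z ≤ (β : EReal)}}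

/-- Feasible set under second-order stochastic dominance constraints. -/
def C2 {n m s : ℕ} (c : Fin n → ℝ) (q d : Fin m → ℝ) (A : Matrix (Fin s) (Fin m) ℝ)
    (T : Matrix (Fin s) (Fin n) ℝ) (X : Set (Fin n → ℝ)) (ν : Measure ℝ)
    (μ : ProbabilityMeasure (Fin s → ℝ)) : Set (Fin n → ℝ) :=
  {x ∈ X | ∀ η : ℝ,
    ∫ z, max ((fE c q d A T x z).toReal - η) 0 ∂(μ : Measure (Fin s → ℝ))
      ≤ ∫ b, max (b - η) 0 ∂ν}
/-- One-variable Fourier-Motzkin elimination. -/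
lemma fm_one {ι : Type} [Fintype ι] (a r : ι → ℝ)
    (h0 : ∀ i, a i = 0 → 0 ≤ r i)
    (h1 : ∀ i j, 0 < a i → a j < 0 → 0 ≤ a i * r j - a j * r i) :
    ∃ t : ℝ, ∀ i, a i * t ≤ r i := by
  classical
  by_cases hn : (Finset.univ.filter (fun j => a j < 0)).Nonempty
  · obtain ⟨j, hj, hmax⟩ := Finset.exists_max_image _ (fun j => r j / a j) hn
    have hj' : a j < 0 := by simpa using hj
    refine ⟨r j / a j, fun i => ?_⟩
    rcases lt_trichotomy (a i) 0 with hi | hi | hi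
    · have h := hmax i (by simpa using hi)
      have h2 := mul_le_mul_of_nonpos_left h hi.le
      have h3 : a i * (r i / a i) = r i := by
        have hi0 : a i ≠ 0 := by intro h0'; rw [h0'] at hi; exact lt_irrefl _ hi
        field_simp
      linarith
    · rw [hi, zero_mul]; exact h0 i hi
    · have h := h1 i j hi hj'
      have h3 : a j * (r j / a j) = r j := by
        have := hj'.ne
        field_simp
      have h4 : 0 ≤ a j * (a i * (r j / a j) - r i) := by
        have : a j * (a i * (r j / a j) - r i) = a i * (a j * (r j / a j)) - a j * r i := by ring
        rw [this, h3]; exact h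
      by_contra hc
      push Not at hc
      nlinarith
  · have hneg : ∀ j, ¬ a j < 0 := by
      intro j hj
      exact hn ⟨j, by simpa using hj⟩
    by_cases hp : (Finset.univ.filter (fun j => 0 < a j)).Nonempty
    · obtain ⟨j, hj, hmin⟩ := Finset.exists_min_image _ (fun j => r j / a j) hp
      refine ⟨r j / a j, fun i => ?_⟩
      rcases lt_trichotomy (a i) 0 with hi | hi | hi
      · exact absurd hi (hneg i)
      · rw [hi, zero_mul]; exact h0 i hi
      · have h := hmin i (by simpa using hi)
        have h2 := mul_le_mul_of_nonneg_left h hi.le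
        have h3 : a i * (r i / a i) = r i := by field_simp
        linarith
    · refine ⟨0, fun i => ?_⟩
      rcases lt_trichotomy (a i) 0 with hi | hi | hi
      · exact absurd hi (hneg i)
      · rw [hi, zero_mul]; exact h0 i hi
      · exact absurd ⟨i, by simpa using hi⟩ hp

/-- The set of parameters for which a finite linear system is solvable is closed. -/
lemma fm_closed {E : Type*} [TopologicalSpace E] (m : ℕ) :
    ∀ (ι : Type) [Fintype ι] (M : ι → Fin m → ℝ) (b : ι → E → ℝ),
      (∀ i, Continuous (b i)) →
      IsClosed {e | ∃ y : Fin m → ℝ, ∀ i, ∑ j, M i j * y j ≤ b i e} := by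
  classical
  induction m with
  | zero =>
    intro ι _ M b hb
    have : {e | ∃ y : Fin 0 → ℝ, ∀ i, ∑ j, M i j * y j ≤ b i e} = ⋂ i, {e | 0 ≤ b i e} := by
      ext e
      simp
    rw [this]
    exact isClosed_iInter fun i => isClosed_le continuous_const (hb i)
  | succ m ih =>
    intro ι _ M b hb
    have key := ih ({i // M i 0 = 0} ⊕ ({i // 0 < M i 0} × {j // M j 0 < 0}))
      (Sum.elim (fun i k => M i.1 k.succ)
        (fun p k => M p.1.1 0 * M p.2.1 k.succ - M p.2.1 0 * M p.1.1 k.succ))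
      (Sum.elim (fun i => b i.1)
        (fun p e => M p.1.1 0 * b p.2.1 e - M p.2.1 0 * b p.1.1 e))
      (by
        rintro (i | p)
        · exact hb _
        · exact (continuous_const.mul (hb _)).sub (continuous_const.mul (hb _)))
    convert key using 1
    ext e
    simp only [mem_ofPred_eq]
    have hsum : ∀ (y : Fin m → ℝ) (i j : ι),
        ∑ k, (M i 0 * M j k.succ - M j 0 * M i k.succ) * y k
          = M i 0 * ∑ k, M j k.succ * y k - M j 0 * ∑ k, M i k.succ * y k := by
      intro y i j
      rw [Finset.mul_sum, Finset.mul_sum, ← Finset.sum_sub_distrib]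
      exact Finset.sum_congr rfl fun k _ => by ring
    constructor
    · rintro ⟨y, hy⟩
      refine ⟨fun k => y k.succ, ?_⟩
      simp only [Fin.sum_univ_succ] at hy
      rintro (⟨i, hi⟩ | ⟨⟨i, hi⟩, ⟨j, hj⟩⟩)
      · have := hy i
        rw [hi, zero_mul, zero_add] at this
        exact this
      · simp only [Sum.elim_inr, hsum]
        have h1 := mul_le_mul_of_nonneg_left (hy j) hi.le
        have h2 := mul_le_mul_of_nonpos_left (hy i) hj.le
        linarith
    · rintro ⟨y, hy⟩
      obtain ⟨t, ht⟩ := fm_one (fun i => M i 0) (fun i => b i e - ∑ k, M i k.succ * y k)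
        (fun i hi => by
          have := hy (Sum.inl ⟨i, hi⟩)
          simp only [Sum.elim_inl] at this
          linarith)
        (fun i j hi hj => by
          have := hy (Sum.inr ⟨⟨i, hi⟩, ⟨j, hj⟩⟩)
          simp only [Sum.elim_inr, hsum] at this
          linarith)
      refine ⟨Fin.cons t y, fun i => ?_⟩
      rw [Fin.sum_univ_succ]
      simp only [Fin.cons_zero, Fin.cons_succ]
      linarith [ht i]

/-- Optimal value of the lower level problem as a function of the right-hand side. -/
def lval {m s : ℕ} (d : Fin m → ℝ) (A : Matrix (Fin s) (Fin m) ℝ) (w : Fin s → ℝ) : ℝ :=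
  sInf ((fun y => d ⬝ᵥ y) '' {y | A.mulVec y ≤ w})

lemma lval_continuous {m s : ℕ} (d : Fin m → ℝ) (A : Matrix (Fin s) (Fin m) ℝ)
    (hne : ∀ w, {y | A.mulVec y ≤ w}.Nonempty)
    (hbd : ∀ w, BddBelow ((fun y => d ⬝ᵥ y) '' {y | A.mulVec y ≤ w})) :
    Continuous (lval d A) := by
  rw [← continuousOn_univ]
  apply ConvexOn.continuousOn isOpen_univ
  refine ⟨convex_univ, ?_⟩
  intro w _ v _ a b ha hb hab
  apply le_of_forall_pos_le_add
  intro ε hε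
  obtain ⟨_, ⟨y, hy, rfl⟩, hy2⟩ := exists_lt_of_csInf_lt ((hne w).image (fun y => d ⬝ᵥ y))
    (show lval d A w < lval d A w + ε by linarith)
  obtain ⟨_, ⟨u, hu, rfl⟩, hu2⟩ := exists_lt_of_csInf_lt ((hne v).image (fun y => d ⬝ᵥ y))
    (show lval d A v < lval d A v + ε by linarith)
  have h : lval d A (a • w + b • v) ≤ d ⬝ᵥ (a • y + b • u) := by
    apply csInf_le (hbd _)
    refine ⟨_, ?_, rfl⟩
    simp only [mem_ofPred_eq] at *
    rw [Matrix.mulVec_add, Matrix.mulVec_smul, Matrix.mulVec_smul]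
    exact add_le_add (smul_le_smul_of_nonneg_left hy ha) (smul_le_smul_of_nonneg_left hu hb)
  rw [dotProduct_add, dotProduct_smul, dotProduct_smul] at h
  simp only [smul_eq_mul] at *
  have e1 := mul_le_mul_of_nonneg_left hy2.le ha
  have e2 := mul_le_mul_of_nonneg_left hu2.le hb
  have e3 : a * ε + b * ε = ε := by rw [← add_mul, hab, one_mul]
  linarith

lemma feas_bdd {n m s : ℕ} (c : Fin n → ℝ) (q d : Fin m → ℝ)
    (A : Matrix (Fin s) (Fin m) ℝ) (T : Matrix (Fin s) (Fin n) ℝ)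
    (hdom : (domf c q d A T).Nonempty) (hne : ∀ w, {y | A.mulVec y ≤ w}.Nonempty) (w : Fin s → ℝ) :
    BddBelow ((fun y => d ⬝ᵥ y) '' {y | A.mulVec y ≤ w}) := by
  obtain ⟨⟨x0, z0⟩, h1, h2⟩ := hdom
  have hΨ : (Psi d A T x0 z0).Nonempty := by
    by_contra hc
    rw [Set.not_nonempty_iff_eq_empty] at hc
    apply h1
    simp [fE, hc]
  obtain ⟨y0, hy0, hmin⟩ := hΨ
  obtain ⟨y', hy'⟩ := hne ((2 : ℝ) • (T.mulVec x0 + z0) - w)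
  refine ⟨2 * (d ⬝ᵥ y0) - d ⬝ᵥ y', ?_⟩
  rintro _ ⟨y, hy, rfl⟩
  have := hmin ((1 / 2 : ℝ) • (y + y')) (by
    intro i
    have a1 := hy i
    have a2 := hy' i
    simp only [Matrix.mulVec_smul, Matrix.mulVec_add, Pi.smul_apply, Pi.add_apply, Pi.sub_apply,
      smul_eq_mul] at *
    linarith)
  rw [dotProduct_smul, dotProduct_add, smul_eq_mul] at this
  simp only
  linarith

lemma sublevel_closed {n m s : ℕ} (c : Fin n → ℝ) (q d : Fin m → ℝ)
    (A : Matrix (Fin s) (Fin m) ℝ) (T : Matrix (Fin s) (Fin n) ℝ)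
    (hdom : (domf c q d A T).Nonempty) (hP : Pfeas A T = Set.univ) (β : ℝ) :
    IsClosed {p : (Fin n → ℝ) × (Fin s → ℝ) | fE c q d A T p.1 p.2 ≤ (β : EReal)} := by
  have hne : ∀ w, {y | A.mulVec y ≤ w}.Nonempty := by
    intro w
    have h : ((0 : Fin n → ℝ), w) ∈ Pfeas A T := by rw [hP]; trivial
    simpa [Pfeas, LowerFeas] using h
  have hbd := feas_bdd c q d A T hdom hne
  have hcont := lval_continuous d A hne hbd
  have hPsi : ∀ x z y, y ∈ Psi d A T x z ↔
      A.mulVec y ≤ T.mulVec x + z ∧ d ⬝ᵥ y ≤ lval d A (T.mulVec x + z) := by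
    intro x z y
    constructor
    · rintro ⟨h1, h2⟩
      refine ⟨h1, le_csInf ((hne _).image _) ?_⟩
      rintro _ ⟨y', hy', rfl⟩
      exact h2 y' hy'
    · rintro ⟨h1, h2⟩
      exact ⟨h1, fun y' hy' => h2.trans (csInf_le (hbd _) ⟨y', hy', rfl⟩)⟩
  have hK := fm_closed (E := ((Fin n → ℝ) × (Fin s → ℝ)) × ℝ) m (Option (Option (Fin s)))
    (fun o => o.elim q (fun o' => o'.elim d (fun i => A i)))
    (fun o p => o.elim (β - c ⬝ᵥ p.1.1 + p.2) (fun o' => o'.elim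
      (lval d A (T.mulVec p.1.1 + p.1.2)) (fun i => (T.mulVec p.1.1 + p.1.2) i)))
    (by
      have hw : Continuous fun p : ((Fin n → ℝ) × (Fin s → ℝ)) × ℝ =>
          T.mulVec p.1.1 + p.1.2 := by fun_prop
      rintro (_ | _ | i)
      · simp only [Option.elim]
        fun_prop
      · exact hcont.comp hw
      · exact (continuous_apply i).comp hw)
  have hKmem : ∀ x z ε, (((x, z), ε) ∈ {e : ((Fin n → ℝ) × (Fin s → ℝ)) × ℝ |
      ∃ y : Fin m → ℝ, ∀ o : Option (Option (Fin s)),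
        ∑ j, (o.elim q (fun o' => o'.elim d (fun i => A i)) : Fin m → ℝ) j * y j ≤
        o.elim (β - c ⬝ᵥ e.1.1 + e.2) (fun o' => o'.elim
      (lval d A (T.mulVec e.1.1 + e.1.2)) (fun i => (T.mulVec e.1.1 + e.1.2) i))}) ↔
      ∃ y ∈ Psi d A T x z, q ⬝ᵥ y ≤ β - c ⬝ᵥ x + ε := by
    intro x z ε
    simp only [mem_ofPred_eq, hPsi]
    apply exists_congr
    intro y
    rw [Option.forall, Option.forall]
    constructor
    · rintro ⟨h1, h2, h3⟩
      exact ⟨⟨h3, h2⟩, h1⟩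
    · rintro ⟨⟨h3, h2⟩, h1⟩
      exact ⟨h1, h2, h3⟩
  have heq : {p : (Fin n → ℝ) × (Fin s → ℝ) | fE c q d A T p.1 p.2 ≤ (β : EReal)} =
      (fun p => (p, (0 : ℝ))) ⁻¹' {e : ((Fin n → ℝ) × (Fin s → ℝ)) × ℝ |
      ∃ y : Fin m → ℝ, ∀ o : Option (Option (Fin s)),
        ∑ j, (o.elim q (fun o' => o'.elim d (fun i => A i)) : Fin m → ℝ) j * y j ≤
        o.elim (β - c ⬝ᵥ e.1.1 + e.2) (fun o' => o'.elim
      (lval d A (T.mulVec e.1.1 + e.1.2)) (fun i => (T.mulVec e.1.1 + e.1.2) i))} := by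
    ext ⟨x, z⟩
    rw [mem_preimage]
    constructor
    · intro hf
      have hseq : Tendsto (fun ε : ℝ => ((x, z), ε)) (𝓝[>] 0) (𝓝 ((x, z), (0 : ℝ))) := by
        have : Continuous (fun ε : ℝ => ((x, z), ε)) := by fun_prop
        exact (this.tendsto 0).mono_left nhdsWithin_le_nhds
      apply hK.mem_of_tendsto hseq
      filter_upwards [self_mem_nhdsWithin] with ε hε
      have hε : 0 < ε := hε
      apply (hKmem x z ε).2
      by_contra hc
      push Not at hc
      have hge : ((β - c ⬝ᵥ x + ε : ℝ) : EReal) ≤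
          sInf ((fun y => ((q ⬝ᵥ y : ℝ) : EReal)) '' Psi d A T x z) := by
        apply le_sInf
        rintro _ ⟨y, hy, rfl⟩
        exact EReal.coe_le_coe_iff.2 (hc y hy).le
      have h2 : ((c ⬝ᵥ x : ℝ) : EReal) + ((β - c ⬝ᵥ x + ε : ℝ) : EReal) ≤ (β : EReal) :=
        (add_le_add le_rfl hge).trans hf
      rw [← EReal.coe_add, EReal.coe_le_coe_iff] at h2
      linarith
    · intro hk
      obtain ⟨y, hy, hq⟩ := (hKmem x z 0).1 hk
      have h1 : sInf ((fun y => ((q ⬝ᵥ y : ℝ) : EReal)) '' Psi d A T x z) ≤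
          ((β - c ⬝ᵥ x : ℝ) : EReal) :=
        (sInf_le (mem_image_of_mem _ hy)).trans (EReal.coe_le_coe_iff.2 (by linarith))
      have h2 : fE c q d A T x z ≤ ((c ⬝ᵥ x : ℝ) : EReal) + ((β - c ⬝ᵥ x : ℝ) : EReal) :=
        add_le_add le_rfl h1
      rw [← EReal.coe_add] at h2
      simpa using h2
  rw [heq]
  exact hK.preimage (by fun_prop)

lemma limit_measure {n s : ℕ} (F : Set ((Fin n → ℝ) × (Fin s → ℝ))) (hF : IsClosed F)
    (μl : ℕ → ProbabilityMeasure (Fin s → ℝ)) (μ : ProbabilityMeasure (Fin s → ℝ))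
    (hμ : Filter.Tendsto μl Filter.atTop (𝓝 μ))
    (xl : ℕ → (Fin n → ℝ)) (x : Fin n → ℝ)
    (hx : Filter.Tendsto xl Filter.atTop (𝓝 x)) (r : ℝ≥0∞)
    (h : ∀ l, r ≤ (μl l : Measure (Fin s → ℝ)) {z | (xl l, z) ∈ F}) :
    r ≤ (μ : Measure (Fin s → ℝ)) {z | (x, z) ∈ F} := by
  let G : ℕ → Set (Fin s → ℝ) := fun k => closure {z | ∃ l, k ≤ l ∧ (xl l, z) ∈ F}
  have hG : ∀ k, r ≤ (μ : Measure (Fin s → ℝ)) (G k) := by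
    intro k
    refine le_trans ?_ (ProbabilityMeasure.limsup_measure_closed_le_of_tendsto hμ
      (isClosed_closure (s := {z | ∃ l, k ≤ l ∧ (xl l, z) ∈ F})))
    refine le_limsup_of_frequently_le ?_ (by isBoundedDefault)
    apply Eventually.frequently
    filter_upwards [eventually_ge_atTop k] with l hl
    exact (h l).trans (measure_mono fun z hz => subset_closure ⟨l, hl, hz⟩)
  have hanti : Antitone G := by
    intro k k' hkk
    apply closure_mono
    rintro z ⟨l, hl, hz⟩
    exact ⟨l, hkk.trans hl, hz⟩
  have ht := tendsto_measure_iInter_atTop (μ := (μ : Measure (Fin s → ℝ)))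
    (fun k => (isClosed_closure : IsClosed (G k)).measurableSet.nullMeasurableSet) hanti
    ⟨0, measure_ne_top _ _⟩
  refine (ge_of_tendsto' ht hG).trans (measure_mono ?_)
  intro z hz
  by_contra hc
  have hn : Fᶜ ∈ 𝓝 (x, z) := hF.isOpen_compl.mem_nhds hc
  rw [nhds_prod_eq, mem_prod_iff] at hn
  obtain ⟨U, hU, V, hV, hUV⟩ := hn
  obtain ⟨k, hk⟩ := eventually_atTop.1 (hx hU)
  have hzk : z ∈ closure {z | ∃ l, k ≤ l ∧ (xl l, z) ∈ F} := mem_iInter.1 hz k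
  obtain ⟨v, hv, l, hl, hvl⟩ := mem_closure_iff_nhds.1 hzk V hV
  exact hUV (mk_mem_prod (hk l hl) hv) hvl

theorem C1_closed_wrt_weak_convergence {n m s : ℕ}
    (c : Fin n → ℝ) (q d : Fin m → ℝ)
    (A : Matrix (Fin s) (Fin m) ℝ) (T : Matrix (Fin s) (Fin n) ℝ)
    (hdom : (domf c q d A T).Nonempty) (hP : Pfeas A T = Set.univ)
    (X : Set (Fin n → ℝ)) (hXpoly : IsPolyhedron X) (hXne : X.Nonempty)
    (ν : Measure ℝ) [IsProbabilityMeasure ν]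
    (μl : ℕ → ProbabilityMeasure (Fin s → ℝ)) (μ : ProbabilityMeasure (Fin s → ℝ))
    (hμ : Filter.Tendsto μl Filter.atTop (𝓝 μ))
    (xl : ℕ → (Fin n → ℝ)) (x : Fin n → ℝ)
    (hx : Filter.Tendsto xl Filter.atTop (𝓝 x))
    (hfeas : ∀ l : ℕ, xl l ∈ C1 c q d A T X ν (μl l)) :
    x ∈ C1 c q d A T X ν μ := by
  obtain ⟨k, B, b, rfl⟩ := hXpoly
  refine ⟨?_, fun β => ?_⟩
  · have hcl : IsClosed {x : Fin n → ℝ | B.mulVec x ≤ b} :=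
      isClosed_le (by fun_prop) continuous_const
    exact hcl.mem_of_tendsto hx (Eventually.of_forall fun l => (hfeas l).1)
  · exact limit_measure _ (sublevel_closed c q d A T hdom hP β) μl μ hμ xl x hx _
      (fun l => (hfeas l).2 β)
end
end

section
/- Assume dom f ≠ ∅, P = ℝⁿ × ℝˢ, let X ⊆ ℝⁿ be nonempty and compact, and let g : ℝⁿ → ℝ be lower semicontinuous. Then: (a) the optimal value function φ₁(μ) := inf { g(x) : x ∈ C₁(μ) } (taking value +∞ when C₁(μ) = ∅) is lower semicontinuous with respect to weak convergence at every μ with C₁(μ) ≠ ∅; and (b) if additionally ν ∈ 𝓜¹₁, the function φ₂(μ) := inf { g(x) : x ∈ C₂(μ) } is lower semicontinuous with respect to weak convergence on 𝓜¹_s at every μ with C₂(μ) ≠ ∅. -/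
open MeasureTheory Matrix Set Topology Filter
open scoped ENNReal NNReal

noncomputable section

/-! ### Lexicographic basic solutions -/

/-- Lexicographic comparison with respect to the pair of objectives `(d, q)`. -/
def LexLe {m : ℕ} (d q : Fin m → ℝ) (y y' : Fin m → ℝ) : Prop :=
  d ⬝ᵥ y < d ⬝ᵥ y' ∨ (d ⬝ᵥ y = d ⬝ᵥ y' ∧ q ⬝ᵥ y ≤ q ⬝ᵥ y')

theorem LexLe.refl' {m : ℕ} (d q y : Fin m → ℝ) : LexLe d q y y := Or.inr ⟨rfl, le_rfl⟩

theorem LexLe.trans' {m : ℕ} {d q y y' y'' : Fin m → ℝ} (h : LexLe d q y y')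
    (h' : LexLe d q y' y'') : LexLe d q y y'' := by
  unfold LexLe at *
  rcases h with h | ⟨h, h2⟩ <;> rcases h' with h' | ⟨h', h2'⟩
  · left; linarith
  · left; linarith
  · left; linarith
  · right; exact ⟨by linarith, by linarith⟩

theorem LexLe.total' {m : ℕ} (d q y y' : Fin m → ℝ) : LexLe d q y y' ∨ LexLe d q y' y := by
  unfold LexLe
  rcases lt_trichotomy (d ⬝ᵥ y) (d ⬝ᵥ y') with h | h | h
  · exact Or.inl (Or.inl h)
  · rcases le_total (q ⬝ᵥ y) (q ⬝ᵥ y') with h' | h'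
    · exact Or.inl (Or.inr ⟨h, h'⟩)
    · exact Or.inr (Or.inr ⟨h.symm, h'⟩)
  · exact Or.inr (Or.inl h)

theorem LexLe.add_smul {m : ℕ} {d q y w : Fin m → ℝ} (h : LexLe d q w 0) {t : ℝ} (ht : 0 ≤ t) :
    LexLe d q (y + t • w) y := by
  unfold LexLe at *
  simp only [dotProduct_zero, dotProduct_add, dotProduct_smul, smul_eq_mul] at *
  rcases h with h | ⟨h, h2⟩
  · rcases ht.eq_or_lt with rfl | ht
    · right; simp
    · left; nlinarith
  · right; rw [h]; constructor
    · simp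
    · nlinarith

/-- Every linear map has a generalized inverse. -/
theorem exists_genInverse {V W : Type*} [AddCommGroup V] [Module ℝ V] [AddCommGroup W] [Module ℝ W]
    (f : V →ₗ[ℝ] W) : ∃ g : W →ₗ[ℝ] V, ∀ v, f (g (f v)) = f v := by
  obtain ⟨r, hr⟩ := f.rangeRestrict.exists_rightInverse_of_surjective
    (LinearMap.range_eq_top.2 f.surjective_rangeRestrict)
  obtain ⟨g, hg⟩ := LinearMap.exists_extend r
  refine ⟨g, fun v => ?_⟩
  have h1 : g (f v) = r (f.rangeRestrict v) := by
    rw [← hg]; rfl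
  have h2 : f.rangeRestrict (r (f.rangeRestrict v)) = f.rangeRestrict v := by
    have := LinearMap.congr_fun hr (f.rangeRestrict v)
    exact this
  rw [h1]
  exact congrArg Subtype.val h2

/-- Coordinate projection onto the coordinates in `J`. -/
def projJ {s : ℕ} (J : Finset (Fin s)) : (Fin s → ℝ) →ₗ[ℝ] (Fin s → ℝ) where
  toFun b := fun i => if i ∈ J then b i else 0
  map_add' a b := by ext i; by_cases h : i ∈ J <;> simp [h]
  map_smul' a b := by ext i; by_cases h : i ∈ J <;> simp [h]

/-- The basic solution map associated with the index set `J`. -/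
def basicSol {m s : ℕ} (A : Matrix (Fin s) (Fin m) ℝ) (J : Finset (Fin s)) :
    (Fin s → ℝ) →ₗ[ℝ] (Fin m → ℝ) :=
  (Classical.choose (exists_genInverse (projJ J ∘ₗ A.mulVecLin))) ∘ₗ projJ J

theorem basicSol_spec {m s : ℕ} (A : Matrix (Fin s) (Fin m) ℝ) (J : Finset (Fin s))
    (b : Fin s → ℝ) (y : Fin m → ℝ) (hy : ∀ i ∈ J, A.mulVec y i = b i) :
    ∀ i ∈ J, A.mulVec (basicSol A J b) i = b i := by
  have h := Classical.choose_spec (exists_genInverse (projJ J ∘ₗ A.mulVecLin)) y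
  have hb : projJ J b = (projJ J ∘ₗ A.mulVecLin) y := by
    ext i
    by_cases hi : i ∈ J
    · simp [projJ, hi, hy i hi]
    · simp [projJ, hi]
  intro i hi
  have h2 := congrFun h i
  rw [← hb] at h2
  simpa [projJ, hi, basicSol] using h2

open Classical in
/-- One improving step: from a feasible point with a direction, reach a new tight constraint. -/
theorem step_lemma {m s : ℕ} (A : Matrix (Fin s) (Fin m) ℝ) (d q : Fin m → ℝ)
    (b : Fin s → ℝ) (y w : Fin m → ℝ) (hy : A.mulVec y ≤ b)
    (hw : LexLe d q w 0) (htight : ∀ i, A.mulVec y i = b i → A.mulVec w i = 0)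
    (hpos : ∃ i, 0 < A.mulVec w i) :
    ∃ y', A.mulVec y' ≤ b ∧ LexLe d q y' y ∧
      (Finset.univ.filter fun i => A.mulVec y i = b i) ⊂
        (Finset.univ.filter fun i => A.mulVec y' i = b i) := by
  have hne : (Finset.univ.filter fun i => 0 < A.mulVec w i).Nonempty := by
    obtain ⟨i, hi⟩ := hpos
    exact ⟨i, by simpa using hi⟩
  obtain ⟨k, hk, hmin⟩ := Finset.exists_min_image _
    (fun i => (b i - A.mulVec y i) / A.mulVec w i) hne
  have hk' : 0 < A.mulVec w k := by simpa using hk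
  set t := (b k - A.mulVec y k) / A.mulVec w k with ht
  have ht0 : 0 ≤ t := div_nonneg (by linarith [hy k]) hk'.le
  have hA : ∀ i, A.mulVec (y + t • w) i = A.mulVec y i + t * A.mulVec w i := by
    intro i; simp [Matrix.mulVec_add, Matrix.mulVec_smul]
  refine ⟨y + t • w, ?_, hw.add_smul ht0, ?_⟩
  · intro i
    rw [hA]
    rcases le_or_gt (A.mulVec w i) 0 with h | h
    · nlinarith [hy i]
    · have := hmin i (by simpa using h)
      rw [le_div_iff₀ h] at this
      linarith
  · rw [Finset.ssubset_iff_of_subset]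
    · refine ⟨k, ?_, ?_⟩
      · simp only [Finset.mem_filter, Finset.mem_univ, true_and]
        rw [hA, ht]; field_simp; ring
      · simp only [Finset.mem_filter, Finset.mem_univ, true_and]
        intro h
        exact hk'.ne' (htight k h)
    · intro i hi
      simp only [Finset.mem_filter, Finset.mem_univ, true_and] at hi ⊢
      rw [hA, htight i hi, hi]; simp

open Classical in
/-- Each feasible point is lexicographically dominated by a feasible basic solution. -/
theorem exists_basic {m s : ℕ} (A : Matrix (Fin s) (Fin m) ℝ) (d q : Fin m → ℝ)
    (hrec : ∀ w, A.mulVec w ≤ 0 → LexLe d q 0 w)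
    (b : Fin s → ℝ) (y : Fin m → ℝ) (hy : A.mulVec y ≤ b) :
    ∃ J, A.mulVec (basicSol A J b) ≤ b ∧ LexLe d q (basicSol A J b) y := by
  let S : Set (Finset (Fin s)) := {J | ∃ y', A.mulVec y' ≤ b ∧ LexLe d q y' y ∧
    J = (Finset.univ.filter fun i => A.mulVec y' i = b i)}
  obtain ⟨J, hJ⟩ := (Set.toFinite S).exists_maximal ⟨_, y, hy, LexLe.refl' d q y, rfl⟩
  obtain ⟨⟨y', hy', hle, rfl⟩, hmax⟩ := hJ
  set J := (Finset.univ.filter fun i => A.mulVec y' i = b i) with hJdef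
  have hmem : ∀ i, i ∈ J ↔ A.mulVec y' i = b i := by intro i; simp [hJdef]
  -- no improving directions
  have hno : ∀ w, (∀ i ∈ J, A.mulVec w i = 0) → LexLe d q w 0 → ¬ ∃ i, 0 < A.mulVec w i := by
    intro w hw hlex hpos
    obtain ⟨y'', h1, h2, h3⟩ := step_lemma A d q b y' w hy' hlex
      (fun i hi => hw i ((hmem i).2 hi)) hpos
    have := hmax (y := (Finset.univ.filter fun i => A.mulVec y'' i = b i))
      ⟨y'', h1, h2.trans' hle, rfl⟩ h3.1
    exact h3.2 this
  have hneg : ∀ w : Fin m → ℝ, LexLe d q 0 w → LexLe d q (-w) 0 := by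
    intro w h
    unfold LexLe at *
    simp only [dotProduct_zero, dotProduct_neg] at *
    rcases h with h | ⟨h, h2⟩
    · left; linarith
    · right; exact ⟨by linarith, by linarith⟩
  have hker1 : ∀ w, (∀ i ∈ J, A.mulVec w i = 0) → LexLe d q w 0 → A.mulVec w = 0 := by
    intro w hw hlex
    have h1 := hno w hw hlex
    push Not at h1
    have h2 := hrec w h1
    have h3 := hno (-w) (by intro i hi; simp [Matrix.mulVec_neg, hw i hi]) (hneg w h2)
    push Not at h3
    ext i
    have := h3 i
    simp only [Matrix.mulVec_neg, Pi.neg_apply] at this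
    simp only [Pi.zero_apply]
    linarith [h1 i]
  have hker : ∀ w, (∀ i ∈ J, A.mulVec w i = 0) → A.mulVec w = 0 := by
    intro w hw
    rcases LexLe.total' d q w 0 with h | h
    · exact hker1 w hw h
    · have := hker1 (-w) (by intro i hi; simp [Matrix.mulVec_neg, hw i hi]) (hneg w h)
      simpa [Matrix.mulVec_neg] using this
  set u := basicSol A J b with hu
  have hsp := basicSol_spec A J b y' (fun i hi => (hmem i).1 hi)
  have hAe : A.mulVec (u - y') = 0 := by
    apply hker
    intro i hi
    simp only [Matrix.mulVec_sub, Pi.sub_apply]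
    rw [hsp i hi, (hmem i).1 hi]; simp
  have hAu : A.mulVec u = A.mulVec y' := by
    rw [Matrix.mulVec_sub, sub_eq_zero] at hAe; exact hAe
  refine ⟨J, by rw [← hu, hAu]; exact hy', LexLe.trans' ?_ hle⟩
  have h1 : LexLe d q 0 (y' - u) := hrec _ (by rw [Matrix.mulVec_sub, hAu, sub_self])
  unfold LexLe at *
  simp only [dotProduct_zero, dotProduct_sub] at *
  rcases h1 with h | ⟨h, h2⟩
  · left; linarith
  · right; exact ⟨by linarith, by linarith⟩

/-- The feasible basic solutions contain a lexicographic optimum. -/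
theorem exists_lexopt {m s : ℕ} (A : Matrix (Fin s) (Fin m) ℝ) (d q : Fin m → ℝ)
    (hrec : ∀ w, A.mulVec w ≤ 0 → LexLe d q 0 w)
    (b : Fin s → ℝ) (hb : ∃ y, A.mulVec y ≤ b) :
    ∃ J, A.mulVec (basicSol A J b) ≤ b ∧
      ∀ y, A.mulVec y ≤ b → LexLe d q (basicSol A J b) y := by
  classical
  have hne : (Finset.univ.filter fun J => A.mulVec (basicSol A J b) ≤ b).Nonempty := by
    obtain ⟨y, hy⟩ := hb
    obtain ⟨J, hJ, -⟩ := exists_basic A d q hrec b y hy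
    exact ⟨J, by simpa using hJ⟩
  obtain ⟨J, hJ, hmin⟩ := Finset.exists_min_image _
    (fun J => toLex (d ⬝ᵥ basicSol A J b, q ⬝ᵥ basicSol A J b)) hne
  refine ⟨J, by simpa using hJ, fun y hy => ?_⟩
  obtain ⟨J', hJ', hle⟩ := exists_basic A d q hrec b y hy
  refine LexLe.trans' ?_ hle
  have := hmin J' (by simpa using hJ')
  simpa [Prod.Lex.le_iff, LexLe] using this

/-! ### Structure of `f` -/

/-- The recession condition. -/
theorem recession {n m s : ℕ} {c : Fin n → ℝ} {q d : Fin m → ℝ}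
    {A : Matrix (Fin s) (Fin m) ℝ} {T : Matrix (Fin s) (Fin n) ℝ}
    (hdom : (domf c q d A T).Nonempty) :
    ∀ w, A.mulVec w ≤ 0 → LexLe d q 0 w := by
  obtain ⟨⟨x, z⟩, htop, hbot⟩ := hdom
  simp only [fE] at htop hbot
  have hne : (Psi d A T x z).Nonempty := by
    by_contra h
    rw [Set.not_nonempty_iff_eq_empty] at h
    rw [h] at htop
    simp at htop
  obtain ⟨y, hy, hopt⟩ := hne
  intro w hw
  have hfeas : ∀ t : ℝ, 0 ≤ t → y + t • w ∈ LowerFeas A T x z := by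
    intro t ht i
    have h1 := hy i
    have h2 := hw i
    simp only [Matrix.mulVec_add, Matrix.mulVec_smul, Pi.add_apply, Pi.smul_apply, smul_eq_mul,
      Pi.zero_apply] at *
    nlinarith
  have hd : 0 ≤ d ⬝ᵥ w := by
    have := hopt _ (hfeas 1 zero_le_one)
    simp only [dotProduct_add, dotProduct_smul, smul_eq_mul] at this
    linarith
  unfold LexLe
  simp only [dotProduct_zero]
  rcases hd.lt_or_eq with h | h
  · exact Or.inl h
  refine Or.inr ⟨h, ?_⟩
  by_contra! hq
  apply hbot
  have hs : sInf ((fun y => ((q ⬝ᵥ y : ℝ) : EReal)) '' Psi d A T x z) = ⊥ := by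
    rw [EReal.eq_bot_iff_forall_lt]
    intro r
    have hmem : ∀ t : ℝ, 0 ≤ t → y + t • w ∈ Psi d A T x z := by
      intro t ht
      refine ⟨hfeas t ht, fun y' hy' => ?_⟩
      have := hopt y' hy'
      simp only [dotProduct_add, dotProduct_smul, smul_eq_mul, ← h]
      linarith
    set t := (|q ⬝ᵥ y| + |r| + 1) / (-(q ⬝ᵥ w)) with htdef
    have ht : 0 ≤ t := div_nonneg (by positivity) (by linarith)
    have htq : t * (q ⬝ᵥ w) = -(|q ⬝ᵥ y| + |r| + 1) := by
      have hne : q ⬝ᵥ w ≠ 0 := hq.ne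
      rw [htdef, div_neg, neg_mul, div_mul_cancel₀ _ hne]
    refine lt_of_le_of_lt (sInf_le ⟨_, hmem t ht, rfl⟩) ?_
    simp only [EReal.coe_lt_coe_iff, dotProduct_add, dotProduct_smul, smul_eq_mul]
    rw [htq]
    linarith [le_abs_self (q ⬝ᵥ y), neg_abs_le r]
  rw [hs]; simp

theorem fE_le_of_mem {n m s : ℕ} {c : Fin n → ℝ} {q d : Fin m → ℝ}
    {A : Matrix (Fin s) (Fin m) ℝ} {T : Matrix (Fin s) (Fin n) ℝ}
    {x : Fin n → ℝ} {z : Fin s → ℝ} {y : Fin m → ℝ} (hy : y ∈ Psi d A T x z) :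
    fE c q d A T x z ≤ ((c ⬝ᵥ x + q ⬝ᵥ y : ℝ) : EReal) := by
  rw [EReal.coe_add]
  exact add_le_add le_rfl (sInf_le ⟨y, hy, rfl⟩)

/-- Finite representation of `f`. -/
theorem fE_repr {n m s : ℕ} {c : Fin n → ℝ} {q d : Fin m → ℝ}
    {A : Matrix (Fin s) (Fin m) ℝ} {T : Matrix (Fin s) (Fin n) ℝ}
    (hdom : (domf c q d A T).Nonempty) (hP : Pfeas A T = Set.univ)
    (x : Fin n → ℝ) (z : Fin s → ℝ) :
    ∃ J, basicSol A J (T.mulVec x + z) ∈ Psi d A T x z ∧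
      fE c q d A T x z = ((c ⬝ᵥ x + q ⬝ᵥ basicSol A J (T.mulVec x + z) : ℝ) : EReal) := by
  have hf : (x, z) ∈ Pfeas A T := by rw [hP]; trivial
  obtain ⟨J, hJ, hopt⟩ := exists_lexopt A d q (recession hdom) (T.mulVec x + z) hf
  have hmem : basicSol A J (T.mulVec x + z) ∈ Psi d A T x z := by
    refine ⟨hJ, fun y' hy' => ?_⟩
    rcases hopt y' hy' with h | h
    · exact h.le
    · exact h.1.le
  refine ⟨J, hmem, le_antisymm (fE_le_of_mem hmem) ?_⟩
  rw [EReal.coe_add]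
  refine add_le_add le_rfl (le_sInf ?_)
  rintro _ ⟨y, hy, rfl⟩
  simp only [EReal.coe_le_coe_iff]
  rcases hopt y hy.1 with h | h
  · exact absurd (hy.2 _ hJ) (not_le.2 h)
  · exact h.2

theorem continuous_basicSol {n m s : ℕ} (A : Matrix (Fin s) (Fin m) ℝ)
    (T : Matrix (Fin s) (Fin n) ℝ) (J : Finset (Fin s)) :
    Continuous fun p : (Fin n → ℝ) × (Fin s → ℝ) => basicSol A J (T.mulVec p.1 + p.2) := by
  have h1 : Continuous (basicSol A J) := LinearMap.continuous_of_finiteDimensional _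
  have h2 : Continuous (T.mulVec) := LinearMap.continuous_of_finiteDimensional T.mulVecLin
  exact h1.comp ((h2.comp continuous_fst).add continuous_snd)

theorem continuous_dot {m : ℕ} (q : Fin m → ℝ) : Continuous fun y : Fin m → ℝ => q ⬝ᵥ y := by
  unfold dotProduct; fun_prop

/-- The graph of `Ψ` is closed. -/
theorem isClosed_graph_Psi {n m s : ℕ} (d : Fin m → ℝ)
    (A : Matrix (Fin s) (Fin m) ℝ) (T : Matrix (Fin s) (Fin n) ℝ)
    (hP : Pfeas A T = Set.univ) :
    IsClosed {p : ((Fin n → ℝ) × (Fin s → ℝ)) × (Fin m → ℝ) | p.2 ∈ Psi d A T p.1.1 p.1.2} := by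
  have hT : Continuous (T.mulVec) := LinearMap.continuous_of_finiteDimensional T.mulVecLin
  have hA : Continuous (A.mulVec) := LinearMap.continuous_of_finiteDimensional A.mulVecLin
  obtain ⟨w, hw⟩ : ∃ w, ∀ i, A.mulVec w i ≤ -1 := by
    have hf : ((0 : Fin n → ℝ), (fun _ => -1 : Fin s → ℝ)) ∈ Pfeas A T := by rw [hP]; trivial
    obtain ⟨w, hw⟩ := hf
    exact ⟨w, fun i => by simpa using hw i⟩
  refine IsSeqClosed.isClosed ?_
  intro u p hu hlim
  have h1 : Tendsto (fun k => T.mulVec (u k).1.1 + (u k).1.2) atTop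
      (𝓝 (T.mulVec p.1.1 + p.1.2)) :=
    (((hT.comp (continuous_fst.comp continuous_fst)).add
      (continuous_snd.comp continuous_fst)).tendsto p).comp hlim
  have h2 : Tendsto (fun k => (u k).2) atTop (𝓝 p.2) := (continuous_snd.tendsto p).comp hlim
  refine ⟨le_of_tendsto_of_tendsto' ((hA.tendsto _).comp h2) h1 (fun k => (hu k).1), ?_⟩
  intro y' hy'
  have key : ∀ ε : ℝ, 0 < ε → d ⬝ᵥ p.2 ≤ d ⬝ᵥ y' + ε * (d ⬝ᵥ w) := by
    intro ε hε
    have hev : ∀ᶠ k in atTop, ∀ i, A.mulVec (y' + ε • w) i ≤ (T.mulVec (u k).1.1 + (u k).1.2) i := by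
      rw [eventually_all]
      intro i
      have h3 := (tendsto_pi_nhds.1 h1) i
      refine (h3.eventually (lt_mem_nhds (a := A.mulVec (y' + ε • w) i) ?_)).mono fun k hk => hk.le
      have h4 := hy' i
      have h5 := hw i
      simp only [Matrix.mulVec_add, Matrix.mulVec_smul, Pi.add_apply, Pi.smul_apply,
        smul_eq_mul] at *
      nlinarith
    refine le_of_tendsto (((continuous_dot d).tendsto _).comp h2) ?_
    filter_upwards [hev] with k hk
    have := (hu k).2 _ hk
    simpa [dotProduct_add, dotProduct_smul] using this
  have hl : Tendsto (fun ε : ℝ => d ⬝ᵥ y' + ε * (d ⬝ᵥ w)) (𝓝[>] 0) (𝓝 (d ⬝ᵥ y')) := by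
    have : Continuous (fun ε : ℝ => d ⬝ᵥ y' + ε * (d ⬝ᵥ w)) := by fun_prop
    have := (this.tendsto 0).mono_left (nhdsWithin_le_nhds (s := Set.Ioi 0))
    simpa using this
  exact ge_of_tendsto hl (by filter_upwards [self_mem_nhdsWithin] with ε hε using key ε hε)

theorem coe_toReal_fE {n m s : ℕ} {c : Fin n → ℝ} {q d : Fin m → ℝ}
    {A : Matrix (Fin s) (Fin m) ℝ} {T : Matrix (Fin s) (Fin n) ℝ}
    (hdom : (domf c q d A T).Nonempty) (hP : Pfeas A T = Set.univ)
    (x : Fin n → ℝ) (z : Fin s → ℝ) :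
    (((fE c q d A T x z).toReal : ℝ) : EReal) = fE c q d A T x z := by
  obtain ⟨J, -, h⟩ := fE_repr (c := c) hdom hP x z
  rw [h, EReal.toReal_coe]

/-- Sublevel sets of `f` are closed. -/
theorem isClosed_sublevel {n m s : ℕ} {c : Fin n → ℝ} {q d : Fin m → ℝ}
    {A : Matrix (Fin s) (Fin m) ℝ} {T : Matrix (Fin s) (Fin n) ℝ}
    (hdom : (domf c q d A T).Nonempty) (hP : Pfeas A T = Set.univ) (β : ℝ) :
    IsClosed {p : (Fin n → ℝ) × (Fin s → ℝ) | fE c q d A T p.1 p.2 ≤ (β : EReal)} := by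
  have heq : {p : (Fin n → ℝ) × (Fin s → ℝ) | fE c q d A T p.1 p.2 ≤ (β : EReal)} =
      ⋃ J : Finset (Fin s), ({p | basicSol A J (T.mulVec p.1 + p.2) ∈ Psi d A T p.1 p.2} ∩
        {p | c ⬝ᵥ p.1 + q ⬝ᵥ basicSol A J (T.mulVec p.1 + p.2) ≤ β}) := by
    ext p
    simp only [Set.mem_ofPred_eq, Set.mem_iUnion, Set.mem_inter_iff]
    constructor
    · intro h
      obtain ⟨J, hJ, he⟩ := fE_repr (c := c) hdom hP p.1 p.2
      exact ⟨J, hJ, by rw [he] at h; exact_mod_cast h⟩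
    · rintro ⟨J, hJ, hle⟩
      exact (fE_le_of_mem hJ).trans (by exact_mod_cast hle)
  rw [heq]
  refine isClosed_iUnion_of_finite fun J => IsClosed.inter ?_ ?_
  · exact (isClosed_graph_Psi d A T hP).preimage
      (continuous_id.prodMk (continuous_basicSol A T J))
  · exact isClosed_le (((continuous_dot c).comp continuous_fst).add
      ((continuous_dot q).comp (continuous_basicSol A T J))) continuous_const

theorem lsc_toReal_fE {n m s : ℕ} {c : Fin n → ℝ} {q d : Fin m → ℝ}
    {A : Matrix (Fin s) (Fin m) ℝ} {T : Matrix (Fin s) (Fin n) ℝ}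
    (hdom : (domf c q d A T).Nonempty) (hP : Pfeas A T = Set.univ) :
    LowerSemicontinuous fun p : (Fin n → ℝ) × (Fin s → ℝ) => (fE c q d A T p.1 p.2).toReal := by
  rw [lowerSemicontinuous_iff_isClosed_preimage]
  intro β
  convert isClosed_sublevel (c := c) hdom hP β using 1
  ext p
  simp only [Set.mem_preimage, Set.mem_Iic, Set.mem_ofPred_eq]
  rw [← coe_toReal_fE (c := c) hdom hP p.1 p.2, EReal.coe_le_coe_iff, EReal.toReal_coe]

/-- `f(x,·)` is integrable under measures with finite first moment. -/
theorem integrable_toReal_fE {n m s : ℕ} {c : Fin n → ℝ} {q d : Fin m → ℝ}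
    {A : Matrix (Fin s) (Fin m) ℝ} {T : Matrix (Fin s) (Fin n) ℝ}
    (hdom : (domf c q d A T).Nonempty) (hP : Pfeas A T = Set.univ)
    (x : Fin n → ℝ) (μ : Measure (Fin s → ℝ)) [IsProbabilityMeasure μ]
    (hμ : ∫⁻ z, ‖z‖₊ ∂μ < ⊤) :
    Integrable (fun z => (fE c q d A T x z).toReal) μ := by
  have hid : Integrable (fun z : Fin s → ℝ => z) μ := ⟨aestronglyMeasurable_id, hμ⟩
  have hJ : ∀ J : Finset (Fin s),
      Integrable (fun z => c ⬝ᵥ x + q ⬝ᵥ basicSol A J (T.mulVec x + z)) μ := by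
    intro J
    let L : (Fin s → ℝ) →L[ℝ] ℝ := LinearMap.toContinuousLinearMap
      ((dotProductBilin ℝ ℝ q) ∘ₗ basicSol A J)
    have hL : ∀ z, L z = q ⬝ᵥ basicSol A J z := fun z => rfl
    have : Integrable (fun z => c ⬝ᵥ x + (L (T.mulVec x) + L z)) μ :=
      (integrable_const _).add ((integrable_const _).add (L.integrable_comp hid))
    refine this.congr (Eventually.of_forall fun z => ?_)
    simp [hL, map_add, dotProduct_add]
  refine Integrable.mono' (integrable_finsetSum Finset.univ fun J _ => (hJ J).norm) ?_ ?_
  · have := (lsc_toReal_fE (c := c) hdom hP).measurable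
    exact (this.comp measurable_prodMk_left).aestronglyMeasurable
  · refine Eventually.of_forall fun z => ?_
    obtain ⟨J, -, h⟩ := fE_repr (c := c) hdom hP x z
    rw [h, EReal.toReal_coe]
    exact Finset.single_le_sum
      (f := fun J => ‖c ⬝ᵥ x + q ⬝ᵥ basicSol A J (T.mulVec x + z)‖)
      (fun _ _ => norm_nonneg _) (Finset.mem_univ J)

/-! ### Weak convergence -/

theorem tendsto_prod_dirac {n s : ℕ} {u : ℕ → (Fin n → ℝ) × ProbabilityMeasure (Fin s → ℝ)}
    {p : (Fin n → ℝ) × ProbabilityMeasure (Fin s → ℝ)} (hu : Tendsto u atTop (𝓝 p)) :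
    Tendsto (fun k => (diracProba (u k).1).prod (u k).2) atTop
      (𝓝 ((diracProba p.1).prod p.2)) := by
  have h1 : Tendsto (fun k => diracProba (u k).1) atTop (𝓝 (diracProba p.1)) :=
    (continuous_diracProba.tendsto _).comp ((continuous_fst.tendsto _).comp hu)
  have h2 : Tendsto (fun k => (u k).2) atTop (𝓝 p.2) := (continuous_snd.tendsto _).comp hu
  exact (ProbabilityMeasure.continuous_prod.tendsto (diracProba p.1, p.2)).comp
    (h1.prodMk_nhds h2)

theorem prod_dirac_apply {n s : ℕ} (x : Fin n → ℝ) (μ : ProbabilityMeasure (Fin s → ℝ))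
    {E : Set ((Fin n → ℝ) × (Fin s → ℝ))} (hE : MeasurableSet E) :
    (((diracProba x).prod μ : ProbabilityMeasure _) : Measure ((Fin n → ℝ) × (Fin s → ℝ))) E
      = (μ : Measure (Fin s → ℝ)) {z | (x, z) ∈ E} := by
  have : (((diracProba x).prod μ : ProbabilityMeasure _) : Measure ((Fin n → ℝ) × (Fin s → ℝ)))
    = (Measure.dirac x).prod (μ : Measure (Fin s → ℝ)) := rfl
  rw [this, Measure.dirac_prod, Measure.map_apply measurable_prodMk_left hE]
  rfl

/-- Closedness of the first-order constraint for a fixed level. -/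
theorem isClosed_first {n s : ℕ} {E : Set ((Fin n → ℝ) × (Fin s → ℝ))} (hE : IsClosed E)
    (r : ℝ≥0∞) :
    IsClosed {p : (Fin n → ℝ) × ProbabilityMeasure (Fin s → ℝ) |
      r ≤ (p.2 : Measure (Fin s → ℝ)) {z | (p.1, z) ∈ E}} := by
  refine IsSeqClosed.isClosed ?_
  intro u p hu hlim
  have h := ProbabilityMeasure.limsup_measure_closed_le_of_tendsto (tendsto_prod_dirac hlim) hE
  simp only [prod_dirac_apply _ _ hE.measurableSet] at h
  refine le_trans ?_ h
  exact le_limsup_of_frequently_le (Frequently.of_forall hu)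

/-- Closedness of the second-order constraint for a fixed level. -/
theorem isClosed_second {n s : ℕ} {h : (Fin n → ℝ) × (Fin s → ℝ) → ℝ}
    (hh : LowerSemicontinuous h) (hnn : ∀ p, 0 ≤ h p) (r : ℝ≥0∞) :
    IsClosed {p : (Fin n → ℝ) × ProbabilityMeasure (Fin s → ℝ) |
      ∫⁻ z, ENNReal.ofReal (h (p.1, z)) ∂(p.2 : Measure (Fin s → ℝ)) ≤ r} := by
  refine IsSeqClosed.isClosed ?_
  intro u p hu hlim
  have hm := hh.measurable
  have hlay : ∀ (x : Fin n → ℝ) (μ : ProbabilityMeasure (Fin s → ℝ)),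
      ∫⁻ z, ENNReal.ofReal (h (x, z)) ∂(μ : Measure (Fin s → ℝ)) =
        ∫⁻ t in Set.Ioi (0 : ℝ), (μ : Measure (Fin s → ℝ)) {z | t < h (x, z)} := fun x μ =>
    lintegral_eq_lintegral_meas_lt _ (Eventually.of_forall fun z => hnn _)
      (hm.comp measurable_prodMk_left).aemeasurable
  simp only [Set.mem_ofPred_eq, hlay] at hu ⊢
  have hopen : ∀ t : ℝ, (p.2 : Measure (Fin s → ℝ)) {z | t < h (p.1, z)} ≤
      liminf (fun k => ((u k).2 : Measure (Fin s → ℝ)) {z | t < h ((u k).1, z)}) atTop := by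
    intro t
    have ho : IsOpen {p | t < h p} := hh.isOpen_preimage t
    have h := ProbabilityMeasure.le_liminf_measure_open_of_tendsto (tendsto_prod_dirac hlim) ho
    simp only [prod_dirac_apply _ _ ho.measurableSet] at h
    exact h
  calc _ ≤ ∫⁻ t in Set.Ioi (0 : ℝ),
        liminf (fun k => ((u k).2 : Measure (Fin s → ℝ)) {z | t < h ((u k).1, z)}) atTop :=
        lintegral_mono hopen
    _ ≤ liminf (fun k => ∫⁻ t in Set.Ioi (0 : ℝ),
        ((u k).2 : Measure (Fin s → ℝ)) {z | t < h ((u k).1, z)}) atTop :=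
        lintegral_liminf_le fun k => Antitone.measurable fun a b hab =>
          measure_mono fun z hz => lt_of_le_of_lt hab hz
    _ ≤ r := liminf_le_of_frequently_le (Frequently.of_forall hu)

/-- Lower semicontinuity of marginal functions. -/
theorem lsc_marginal {α M : Type*} [TopologicalSpace α] [TopologicalSpace M]
    {X : Set α} (hX : IsCompact X) {g : α → ℝ} (hg : LowerSemicontinuous g)
    {D : Set (α × M)} (hD : IsClosed D) (C : M → Set α) (φ : M → EReal)
    (hφ : ∀ μ, φ μ = ⨅ x ∈ C μ, ((g x : ℝ) : EReal)) (S : Set M)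
    (hC : ∀ μ ∈ S, C μ = {x ∈ X | (x, μ) ∈ D}) (μ : M) (hμ : μ ∈ S) :
    LowerSemicontinuousWithinAt φ S μ := by
  intro a ha
  obtain ⟨a', haa', ha'⟩ := exists_between ha
  have hev : ∀ᶠ μ' in 𝓝 μ, ∀ x ∈ X, ((x, μ') ∈ D → a' < ((g x : ℝ) : EReal)) := by
    apply hX.eventually_forall_of_forall_eventually
      (P := fun μ' x => ((x, μ') ∈ D → a' < ((g x : ℝ) : EReal)))
    intro x hx
    by_cases hxD : (x, μ) ∈ D
    · have h1 : a' < ((g x : ℝ) : EReal) := by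
        refine ha'.trans_le ?_
        rw [hφ]
        exact iInf₂_le x (by rw [hC μ hμ]; exact ⟨hx, hxD⟩)
      have h2 : LowerSemicontinuous fun x => ((g x : ℝ) : EReal) :=
        continuous_coe_real_ereal.comp_lowerSemicontinuous hg EReal.coe_strictMono.monotone
      have h3 := h2 x a' h1
      have h4 := (continuous_snd.tendsto (μ, x)).eventually h3
      exact h4.mono fun z hz _ => hz
    · have h1 : ∀ᶠ p in 𝓝 (x, μ), p ∉ D := hD.isOpen_compl.mem_nhds hxD
      have h2 := (continuous_swap.tendsto (μ, x)).eventually h1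
      exact h2.mono fun z hz hz' => absurd hz' hz
  filter_upwards [nhdsWithin_le_nhds hev, self_mem_nhdsWithin] with μ' h hS
  rw [hφ, hC μ' hS]
  exact haa'.trans_le (le_iInf₂ fun x hx => (h x hx.1 hx.2).le)

theorem optimalValue_lsc_under_dominance_constraints {n m s : ℕ}
    (c : Fin n → ℝ) (q d : Fin m → ℝ)
    (A : Matrix (Fin s) (Fin m) ℝ) (T : Matrix (Fin s) (Fin n) ℝ)
    (hdom : (domf c q d A T).Nonempty) (hP : Pfeas A T = Set.univ)
    (X : Set (Fin n → ℝ)) (hXne : X.Nonempty) (hXcpt : IsCompact X)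
    (g : (Fin n → ℝ) → ℝ) (hg : LowerSemicontinuous g)
    (ν : Measure ℝ) [IsProbabilityMeasure ν]
    (φ₁ φ₂ : ProbabilityMeasure (Fin s → ℝ) → EReal)
    (hφ₁ : ∀ μ, φ₁ μ = ⨅ x ∈ C1 c q d A T X ν μ, ((g x : ℝ) : EReal))
    (hφ₂ : ∀ μ, φ₂ μ = ⨅ x ∈ C2 c q d A T X ν μ, ((g x : ℝ) : EReal)) :
    -- (a) lower semicontinuity of the first-order optimal value function
    (∀ μ : ProbabilityMeasure (Fin s → ℝ), (C1 c q d A T X ν μ).Nonempty →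
      LowerSemicontinuousAt φ₁ μ) ∧
    -- (b) lower semicontinuity of the second-order optimal value function on 𝓜¹_s
    (∫⁻ b, ‖b‖₊ ∂ν < ⊤ →
      ∀ μ ∈ {μ : ProbabilityMeasure (Fin s → ℝ) |
          ∫⁻ z, ‖z‖₊ ∂(μ : Measure (Fin s → ℝ)) < ⊤},
        (C2 c q d A T X ν μ).Nonempty →
        LowerSemicontinuousWithinAt φ₂
          {μ : ProbabilityMeasure (Fin s → ℝ) |
            ∫⁻ z, ‖z‖₊ ∂(μ : Measure (Fin s → ℝ)) < ⊤} μ) := by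
  refine ⟨fun μ _ => ?_, fun _ μ hμ _ => ?_⟩
  · rw [← lowerSemicontinuousWithinAt_univ_iff]
    refine lsc_marginal hXcpt hg (D := ⋂ β : ℝ, {p : (Fin n → ℝ) × ProbabilityMeasure (Fin s → ℝ) | ν (Set.Iic β) ≤
      (p.2 : Measure (Fin s → ℝ)) {z | (p.1, z) ∈
        {p : (Fin n → ℝ) × (Fin s → ℝ) | fE c q d A T p.1 p.2 ≤ (β : EReal)}}})
      (isClosed_iInter fun β => isClosed_first (isClosed_sublevel hdom hP β) _)
      _ φ₁ hφ₁ Set.univ (fun μ _ => ?_) μ trivial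
    ext x
    simp [C1]
  · refine lsc_marginal hXcpt hg (D := ⋂ η : ℝ, {p : (Fin n → ℝ) × ProbabilityMeasure (Fin s → ℝ) |
      ∫⁻ z, ENNReal.ofReal (max ((fE c q d A T p.1 z).toReal - η) 0)
        ∂(p.2 : Measure (Fin s → ℝ)) ≤ ENNReal.ofReal (∫ b, max (b - η) 0 ∂ν)})
      (isClosed_iInter fun η => ?_)
      _ φ₂ hφ₂ _ (fun μ hμ => ?_) μ hμ
    · refine isClosed_second
        (h := fun p => max ((fE c q d A T p.1 p.2).toReal - η) 0) ?_ (fun p => le_max_right _ _) _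
      have hcont : Continuous fun t : ℝ => max (t - η) 0 := by fun_prop
      exact hcont.comp_lowerSemicontinuous (lsc_toReal_fE hdom hP)
        (fun a b hab => max_le_max (by linarith) le_rfl)
    · ext x
      simp only [C2, Set.mem_ofPred_eq, Set.mem_iInter]
      refine and_congr_right fun _ => forall_congr' fun η => ?_
      have hInteg : Integrable (fun z => max ((fE c q d A T x z).toReal - η) 0)
          (μ : Measure (Fin s → ℝ)) :=
        ((integrable_toReal_fE hdom hP x _ hμ).sub (integrable_const η)).pos_part
      have hr : 0 ≤ ∫ b, max (b - η) 0 ∂ν := integral_nonneg fun b => le_max_right (b - η) 0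
      rw [← ofReal_integral_eq_lintegral_ofReal hInteg
        (Eventually.of_forall fun z => le_max_right _ _),
        ENNReal.ofReal_le_ofReal_iff hr]
end
end
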